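/- For every N > 0 there exist ρ = ρ(N) > 0 and c₀ = c₀(N) > 0 such that the following holds. Let B be the unit ball in ℝⁿ, B₊ = {y ∈ ℝⁿ : |y'|² + |y''|² < 1, y'' > 0} the upper half ball, and Γ₀ = B̄₊ ∩ {y'' = 0} its flat face. Let g ∈ C(B̄₊) be harmonic in B₊ and C¹ up to Γ₀, with ∂g/∂y'' = 0 on Γ₀, normalized so that sup_{(1/4)B₊} |g| = 1. If the doubling index satisfies N_g(0,1/4) ≤ N, then there exists x ∈ Γ₀ ∩ (1/8)B such that |g(y)| ≥ c₀ for every y ∈ B(x,ρ) ∩ B₊. -/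

import Mathlib

noncomputable section

open MeasureTheory Metric Set Filter Asymptotics
open scoped Topology NNReal ENNReal RealInnerProductSpace

namespace NodalNeumann

/-- Euclidean space `ℝⁿ`. -/
abbrev Euc (n : ℕ) : Type := EuclideanSpace ℝ (Fin n)

/-- The first `n` coordinates `y'` of a point `y = (y', y'') ∈ ℝ^{n+1}`. -/
def front {n : ℕ} (y : Euc (n + 1)) : Euc n :=
  (EuclideanSpace.equiv (Fin n) ℝ).symm fun i => y i.castSucc

/-- The last coordinate `y''` of a point `y = (y', y'') ∈ ℝ^{n+1}`. -/
def lastc {n : ℕ} (y : Euc (n + 1)) : ℝ := y (Fin.last n)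

/-- `(v, a) ∈ ℝ^{n+1}` built from `v ∈ ℝⁿ` and `a ∈ ℝ`. -/
def snocVec {n : ℕ} (v : Euc n) (a : ℝ) : Euc (n + 1) :=
  (EuclideanSpace.equiv (Fin (n + 1)) ℝ).symm
    fun i => if h : i = Fin.last n then a else v (i.castPred h)

/-- The Laplacian of `u : ℝⁿ → ℝ`. -/
def laplacian {n : ℕ} (u : Euc n → ℝ) (x : Euc n) : ℝ :=
  ∑ i : Fin n, fderiv ℝ (fun y => fderiv ℝ u y (EuclideanSpace.single i 1)) x
    (EuclideanSpace.single i 1)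

/-- `u` is harmonic on `s`. -/
def HarmonicOn {n : ℕ} (u : Euc n → ℝ) (s : Set (Euc n)) : Prop :=
  ContDiffOn ℝ 2 u s ∧ ∀ x ∈ s, laplacian u x = 0

/-- `ν` is the outward unit normal vector of `Ω` at the boundary point `x`:
it is a unit vector, points out of `Ω`, `-ν` points into `Ω`, and it is
orthogonal to the boundary at `x` (in the little-o sense). -/
def OutwardNormalAt {n : ℕ} (Ω : Set (Euc n)) (x ν : Euc n) : Prop :=
  ‖ν‖ = 1 ∧
  (∀ᶠ t : ℝ in 𝓝[>] (0 : ℝ), x + t • ν ∉ closure Ω) ∧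
  (∀ᶠ t : ℝ in 𝓝[>] (0 : ℝ), x - t • ν ∈ Ω) ∧
  (fun y : Euc n => (⟪ν, y - x⟫)) =o[𝓝[frontier Ω] x] fun y => ‖y - x‖

/-- `ν` is an outward unit normal field of `Ω` along `∂Ω ∩ s`. -/
def OutwardNormalFieldOn {n : ℕ} (Ω : Set (Euc n)) (ν : Euc n → Euc n)
    (s : Set (Euc n)) : Prop :=
  ∀ x ∈ frontier Ω ∩ s, OutwardNormalAt Ω x (ν x)

/-- The homogeneous Neumann boundary condition `∂h/∂ν = 0` on `∂Ω ∩ s`. -/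
def NeumannBC {n : ℕ} (Ω : Set (Euc n)) (ν : Euc n → Euc n) (h : Euc n → ℝ)
    (s : Set (Euc n)) : Prop :=
  ∀ x ∈ frontier Ω ∩ s, DifferentiableWithinAt ℝ h (closure Ω) x ∧
    fderivWithin ℝ h (closure Ω) x (ν x) = 0

/-- `f : ℝⁿ → ℝ` is `C^{1,1}` with character `M`: differentiable with `M`-Lipschitz
derivative (and itself `M`-Lipschitz). -/
def IsC11FunWith {n : ℕ} (M : ℝ≥0) (f : Euc n → ℝ) : Prop :=
  Differentiable ℝ f ∧ LipschitzWith M f ∧ LipschitzWith M fun x => fderiv ℝ f x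

/-- `Ω ∩ B(x,r)` is, after an isometry `T` of `ℝ^{n+1}` with `T 0 = x`, the region
in the ball above the graph of a function `f` with `f 0 = 0` satisfying `P`. -/
def IsGraphBall {n : ℕ} (Ω : Set (Euc (n + 1))) (x : Euc (n + 1)) (r : ℝ)
    (P : (Euc n → ℝ) → Prop) : Prop :=
  ∃ (T : Euc (n + 1) ≃ᵃⁱ[ℝ] Euc (n + 1)) (f : Euc n → ℝ), P f ∧ T 0 = x ∧ f 0 = 0 ∧
    Ω ∩ ball x r =
      ⇑T '' {y : Euc (n + 1) | y ∈ ball (0 : Euc (n + 1)) r ∧ f (front y) < lastc y}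

/-- `∂Ω ∩ B(x,r) ∈ Lip(τ)`. -/
def LipGraphBall {n : ℕ} (Ω : Set (Euc (n + 1))) (x : Euc (n + 1)) (r τ : ℝ) : Prop :=
  IsGraphBall Ω x r fun f => LipschitzWith (Real.toNNReal τ) f

/-- `Ω` is a `C^{1,1}` domain with character `(ρ, M)`. -/
def IsC11DomainWith {n : ℕ} (Ω : Set (Euc (n + 1))) (ρ : ℝ) (M : ℝ≥0) : Prop :=
  IsOpen Ω ∧ IsConnected Ω ∧ 0 < ρ ∧
    ∀ x ∈ frontier Ω, IsGraphBall Ω x ρ (IsC11FunWith M)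

/-- `Ω` is a `C^{1,1}` domain. -/
def IsC11Domain {n : ℕ} (Ω : Set (Euc (n + 1))) : Prop :=
  ∃ (ρ : ℝ) (M : ℝ≥0), IsC11DomainWith Ω ρ M

/-- `Ω` is a Lipschitz domain with character `(ρ, M)`. -/
def IsLipDomainWith {n : ℕ} (Ω : Set (Euc (n + 1))) (ρ : ℝ) (M : ℝ≥0) : Prop :=
  IsOpen Ω ∧ IsConnected Ω ∧ 0 < ρ ∧
    ∀ x ∈ frontier Ω, IsGraphBall Ω x ρ fun f => LipschitzWith M f

/-- The portion `∂Ω ∩ s` of the boundary has `C^{1,1}` character `(ρ, M)`. -/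
def HasC11CharacterOn {n : ℕ} (Ω : Set (Euc (n + 1))) (s : Set (Euc (n + 1)))
    (ρ : ℝ) (M : ℝ≥0) : Prop :=
  0 < ρ ∧ ∀ x ∈ frontier Ω ∩ s, IsGraphBall Ω x ρ (IsC11FunWith M)

/-- `H_h(x,r) = ∫_{B(x,r) ∩ Ω} h²`. -/
def Hfun {n : ℕ} (Ω : Set (Euc n)) (h : Euc n → ℝ) (x : Euc n) (r : ℝ) : ℝ :=
  ∫ y in ball x r ∩ Ω, h y ^ 2

/-- The doubling index `N_h(x,r) = log (H_h(x,2r) / H_h(x,r))`. -/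
def Nfun {n : ℕ} (Ω : Set (Euc n)) (h : Euc n → ℝ) (x : Euc n) (r : ℝ) : ℝ :=
  Real.log (Hfun Ω h x (2 * r) / Hfun Ω h x r)

/-- Closed axis-parallel cube with centre `c` and side length `s`. -/
def cube {n : ℕ} (c : Euc n) (s : ℝ) : Set (Euc n) :=
  {y : Euc n | ∀ i, |y i - c i| ≤ s / 2}

/-- Maximal doubling index `N*_h(Q)` over the cube of centre `c` and side `s`
(whose diameter is `√n · s`). -/
def Nstar {n : ℕ} (Ω : Set (Euc n)) (h : Euc n → ℝ) (c : Euc n) (s : ℝ) : ℝ :=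
  sSup {N : ℝ | ∃ x ∈ cube c s ∩ closure Ω, ∃ r : ℝ,
    0 < r ∧ r ≤ Real.sqrt n * s ∧ N = Nfun Ω h x r}

/-- The nodal set `Z(h) = {x ∈ Ω : h x = 0}`. -/
def zeroSet {n : ℕ} (Ω : Set (Euc n)) (h : Euc n → ℝ) : Set (Euc n) :=
  {x ∈ Ω | h x = 0}

/-- `sup_s g`. -/
def supOn {α : Type*} (g : α → ℝ) (s : Set α) : ℝ := sSup (g '' s)

/-- The open cylinder `S(x,r,t)` of radius `r` and height `t` whose lower face is
centred at `x`. -/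
def cyl {n : ℕ} (x : Euc (n + 1)) (r t : ℝ) : Set (Euc (n + 1)) :=
  {y : Euc (n + 1) | ‖front y - front x‖ < r ∧ 0 < lastc y - lastc x ∧
    lastc y - lastc x < t}

/-- In the chosen coordinates (centred at `x`, with `e_n = -ν(x)`), `Ω ∩ B(x,R)`
is the region above the graph of the `τ`-Lipschitz function `f` with `f 0 = 0`. -/
def AlignedLipGraphOn {n : ℕ} (Ω : Set (Euc (n + 1))) (x : Euc (n + 1)) (R τ : ℝ)
    (f : Euc n → ℝ) : Prop :=
  LipschitzWith (Real.toNNReal τ) f ∧ f 0 = 0 ∧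
    Ω ∩ ball x R = {y ∈ ball x R | f (front (y - x)) < lastc (y - x)}

/-- `z` is the centre of one of the boundary cubes `q ∈ 𝓑_k(Q)` of the standard
construction for the cube `Q` of centre `xQ` and side `s`: the projection of `z` is
the centre of one of the `2^{k·n}` subcubes of side `s/2^k` of the projection of
`Q`, and `z` lies on `∂Ω`. The cube `q` itself is `cube z (s/2^k)`. -/
def IsBdryCubeCenter {n : ℕ} (Ω : Set (Euc (n + 1))) (xQ : Euc (n + 1)) (s : ℝ)
    (k : ℕ) (z : Euc (n + 1)) : Prop :=
  z ∈ frontier Ω ∧ ∃ a : Fin n → ℕ, (∀ i, a i < 2 ^ k) ∧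
    ∀ i : Fin n, z i.castSucc = xQ i.castSucc - s / 2 + ((a i : ℝ) + 1 / 2) * (s / 2 ^ k)

/-- The infinite cylinder `Ω₀ × ℝ ⊂ ℝ^{n+1}` over `Ω₀ ⊂ ℝⁿ`. -/
def prodDomain {n : ℕ} (Ω₀ : Set (Euc n)) : Set (Euc (n + 1)) :=
  {y : Euc (n + 1) | front y ∈ Ω₀}

/-- The harmonic extension `h(x,t) = e^{√λ t} u(x)` of `u` to `Ω₀ × ℝ`. -/
def hExt {n : ℕ} (lam : ℝ) (u : Euc n → ℝ) : Euc (n + 1) → ℝ :=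
  fun y => Real.exp (Real.sqrt lam * lastc y) * u (front y)


/-- The open upper unit half-ball `B₊ ⊂ ℝ^{n+1}`. -/
def unitHalfBall (n : ℕ) : Set (Euc (n + 1)) :=
  {y : Euc (n + 1) | ‖y‖ < 1 ∧ 0 < lastc y}

/-- The flat face `Γ₀ = B̄₊ ∩ {y'' = 0}` of the upper half-ball. -/
def flatFace (n : ℕ) : Set (Euc (n + 1)) :=
  {y : Euc (n + 1) | ‖y‖ ≤ 1 ∧ lastc y = 0}

/-!
On the unit sphere, the even reflection of `g` across the flat face is uniformly close to a
polynomial, hence to a harmonic polynomial, which may be taken even in `y''`. By the maximum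
principle for the Neumann problem, `g` is uniformly close to that polynomial on the half ball, so it
suffices to bound below even harmonic polynomials `h`.

For the weight `(R² - |y|²)₊`, the homogeneous components of different degrees of a harmonic
polynomial are orthogonal. This gives Bessel's inequality and the mean value property, and therefore
interior bounds for `h` and its components in terms of the weighted norm of `h`, which the doubling
condition controls. If such `h` could be arbitrarily small on a piece of the flat face without being
small inside, their components would converge along an ultrafilter to even harmonic homogeneous
polynomials vanishing on the flat hyperplane. These have zero Cauchy data there, so they vanish
identically, and so does the limit of the `h`: a contradiction. Equicontinuity then spreads the
lower bound from a point of the flat face to a ball of fixed radius.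
-/

section HalfBall

open MvPolynomial InnerProductSpace Laplacian

/-! ### Polynomials and their Laplacians -/

section PolynomialAlgebra

variable {σ R : Type*} [CommSemiring R]

lemma pderiv_pderiv_comm (i j : σ) (p : MvPolynomial σ R) :
    pderiv i (pderiv j p) = pderiv j (pderiv i p) := by
  obtain rfl | hij := eq_or_ne i j
  · rfl
  ext m
  simp only [coeff_pderiv, Finsupp.add_apply, Finsupp.single_eq_of_ne hij,
    Finsupp.single_eq_of_ne hij.symm, add_zero, add_right_comm m (Finsupp.single i 1)]
  ring

lemma totalDegree_pderiv_le (i : σ) (p : MvPolynomial σ R) :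
    (pderiv i p).totalDegree ≤ p.totalDegree - 1 := by
  refine Finset.sup_le fun m hm => ?_
  rw [mem_support_iff, coeff_pderiv] at hm
  have hle := le_totalDegree (mem_support_iff.2 (left_ne_zero_of_mul hm))
  rw [Finsupp.sum_add_index' (fun _ => rfl) (fun _ _ _ => rfl),
    Finsupp.sum_single_index rfl] at hle
  omega

lemma pderiv_homogeneousComponent_succ (i : σ) (k : ℕ) (p : MvPolynomial σ R) :
    pderiv i (homogeneousComponent (k + 1) p) = homogeneousComponent k (pderiv i p) := by
  ext m
  simp only [coeff_pderiv, coeff_homogeneousComponent, map_add, Finsupp.degree_single,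
    add_left_inj, ite_mul, zero_mul]

variable [Fintype σ]

/-- The Laplacian `∑ ∂ᵢ²` as a linear operator on polynomials. -/
def polyLaplacian : MvPolynomial σ R →ₗ[R] MvPolynomial σ R :=
  ∑ i, (pderiv i).toLinearMap ∘ₗ (pderiv i).toLinearMap

lemma polyLaplacian_apply (p : MvPolynomial σ R) :
    polyLaplacian p = ∑ i, pderiv i (pderiv i p) := by
  simp [polyLaplacian]

lemma polyLaplacian_pderiv (j : σ) (p : MvPolynomial σ R) :
    polyLaplacian (pderiv j p) = pderiv j (polyLaplacian p) := by
  simp only [polyLaplacian_apply, map_sum]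
  exact Finset.sum_congr rfl fun i _ => by rw [pderiv_pderiv_comm i j p, pderiv_pderiv_comm i j]

lemma totalDegree_polyLaplacian_le (p : MvPolynomial σ R) :
    (polyLaplacian p).totalDegree ≤ p.totalDegree - 2 := by
  rw [polyLaplacian_apply]
  refine totalDegree_finsetSum_le fun i _ => (totalDegree_pderiv_le i _).trans ?_
  have := totalDegree_pderiv_le i p
  omega

lemma polyLaplacian_eq_zero_of_totalDegree_le_one {p : MvPolynomial σ R}
    (hp : p.totalDegree ≤ 1) : polyLaplacian p = 0 := by
  rw [polyLaplacian_apply]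
  refine Finset.sum_eq_zero fun i _ => ?_
  have hconst : (pderiv i p).totalDegree = 0 := by
    have := totalDegree_pderiv_le i p
    omega
  rw [totalDegree_eq_zero_iff_eq_C.1 hconst, pderiv_C]

lemma polyLaplacian_homogeneousComponent_add_two (k : ℕ) (p : MvPolynomial σ R) :
    polyLaplacian (homogeneousComponent (k + 2) p) = homogeneousComponent k (polyLaplacian p) := by
  simp only [polyLaplacian_apply, pderiv_homogeneousComponent_succ, map_sum]

lemma polyLaplacian_homogeneousComponent_eq_zero {p : MvPolynomial σ R}
    (hp : polyLaplacian p = 0) : ∀ k, polyLaplacian (homogeneousComponent k p) = 0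
  | 0 => polyLaplacian_eq_zero_of_totalDegree_le_one
      ((homogeneousComponent_isHomogeneous 0 p).totalDegree_le.trans zero_le_one)
  | 1 => polyLaplacian_eq_zero_of_totalDegree_le_one
      (homogeneousComponent_isHomogeneous 1 p).totalDegree_le
  | k + 2 => by rw [polyLaplacian_homogeneousComponent_add_two, hp, map_zero]

/-- The polynomial `∑ Xᵢ²`, that is `|x|²`. -/
def normSqPoly (σ R : Type*) [CommSemiring R] [Fintype σ] : MvPolynomial σ R :=
  ∑ i, X i ^ 2

lemma pderiv_normSqPoly (i : σ) : pderiv i (normSqPoly σ R) = C 2 * X i := by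
  classical
  simp [normSqPoly, pderiv_X, Pi.single_apply, map_ofNat C 2]

lemma polyLaplacian_normSqPoly :
    polyLaplacian (normSqPoly σ R) = C (2 * Fintype.card σ : R) := by
  simp [polyLaplacian_apply, pderiv_normSqPoly, mul_comm]

lemma totalDegree_normSqPoly_le : (normSqPoly σ R).totalDegree ≤ 2 :=
  totalDegree_finsetSum_le fun i _ =>
    (isHomogeneous_X_pow i 2).totalDegree_le

end PolynomialAlgebra

section AffineSubstitution

variable {σ R : Type*} [CommSemiring R]

/-- The substitution `Xᵢ ↦ sᵢ Xᵢ + aᵢ`. It covers both translations (`s = 1`) and reflections in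
coordinate hyperplanes (`a = 0` and `sᵢ = ±1`). -/
def diagAffineSubst (s a : σ → R) : MvPolynomial σ R →ₐ[R] MvPolynomial σ R :=
  aeval fun i => C (s i) * X i + C (a i)

lemma eval_diagAffineSubst (s a x : σ → R) (p : MvPolynomial σ R) :
    eval x (diagAffineSubst s a p) = eval (fun i => s i * x i + a i) p := by
  induction p using MvPolynomial.induction_on <;> simp_all [diagAffineSubst]

lemma pderiv_diagAffineSubst (s a : σ → R) (i : σ) (p : MvPolynomial σ R) :
    pderiv i (diagAffineSubst s a p) = C (s i) * diagAffineSubst s a (pderiv i p) := by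
  classical
  induction p using MvPolynomial.induction_on with
  | C c => simp [diagAffineSubst]
  | add p q hp hq => simp only [map_add, hp, hq, mul_add]
  | mul_X p j hp =>
    have hX : pderiv i (diagAffineSubst s a (X j)) =
        C (s i) * diagAffineSubst s a (pderiv i (X j)) := by
      obtain rfl | hij := eq_or_ne i j
      · simp [diagAffineSubst]
      · simp [diagAffineSubst, pderiv_X_of_ne hij.symm]
    rw [map_mul, pderiv_mul, hp, hX, pderiv_mul, map_add, map_mul, map_mul]
    ring

lemma polyLaplacian_diagAffineSubst [Fintype σ] {s : σ → R} (hs : ∀ i, s i ^ 2 = 1) (a : σ → R)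
    (p : MvPolynomial σ R) :
    polyLaplacian (diagAffineSubst s a p) = diagAffineSubst s a (polyLaplacian p) := by
  simp only [polyLaplacian_apply, map_sum]
  refine Finset.sum_congr rfl fun i _ => ?_
  rw [pderiv_diagAffineSubst, pderiv_C_mul, pderiv_diagAffineSubst, ← mul_assoc, ← C_mul, ← sq,
    hs, C_1, one_mul]

end AffineSubstitution

/-! ### Polynomial functions on Euclidean space -/

section PolynomialFunctions

variable {d : ℕ}

lemma eval_normSqPoly (x : Euc d) : eval x (normSqPoly (Fin d) ℝ) = ‖x‖ ^ 2 := by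
  simp [normSqPoly, EuclideanSpace.norm_sq_eq]

lemma analyticOnNhd_eval (p : MvPolynomial (Fin d) ℝ) :
    AnalyticOnNhd ℝ (fun x : Euc d => eval x p) univ :=
  AnalyticOnNhd.eval_continuousLinearMap (EuclideanSpace.equiv (Fin d) ℝ).toContinuousLinearMap p

@[fun_prop]
lemma contDiff_eval (p : MvPolynomial (Fin d) ℝ) {k : WithTop ℕ∞} :
    ContDiff ℝ k fun x : Euc d => eval x p :=
  (analyticOnNhd_eval p).contDiff

@[fun_prop]
lemma continuous_eval (p : MvPolynomial (Fin d) ℝ) : Continuous fun x : Euc d => eval x p :=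
  (contDiff_eval p (k := 0)).continuous

lemma hasFDerivAt_eval (p : MvPolynomial (Fin d) ℝ) (x : Euc d) :
    HasFDerivAt (fun y : Euc d => eval y p)
      (∑ i, eval x (pderiv i p) • (EuclideanSpace.proj i : Euc d →L[ℝ] ℝ)) x := by
  induction p using MvPolynomial.induction_on with
  | C a => simpa using hasFDerivAt_const a x
  | add p q hp hq =>
    simpa only [map_add, add_smul, Finset.sum_add_distrib] using hp.fun_add hq
  | mul_X p j hp =>
    have hX : HasFDerivAt (fun y : Euc d => y j) (EuclideanSpace.proj j : Euc d →L[ℝ] ℝ) x :=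
      (EuclideanSpace.proj j : Euc d →L[ℝ] ℝ).hasFDerivAt
    simp only [map_mul, eval_X]
    refine (hp.fun_mul hX).congr_fderiv ?_
    ext v
    simp [pderiv_X, Pi.single_apply, apply_ite, add_mul, Finset.sum_add_distrib, Finset.mul_sum,
      mul_assoc]

lemma fderiv_eval_single (p : MvPolynomial (Fin d) ℝ) (x : Euc d) (i : Fin d) :
    fderiv ℝ (fun y : Euc d => eval y p) x (EuclideanSpace.single i 1) = eval x (pderiv i p) := by
  simp [(hasFDerivAt_eval p x).fderiv]

lemma hasDerivAt_eval_add_smul_single (p : MvPolynomial (Fin d) ℝ) (x : Euc d) (i : Fin d)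
    (t : ℝ) :
    HasDerivAt (fun s : ℝ => eval (⇑(x + s • EuclideanSpace.single i (1 : ℝ))) p)
      (eval (⇑(x + t • EuclideanSpace.single i (1 : ℝ))) (pderiv i p)) t := by
  set v : Euc d := EuclideanSpace.single i 1
  have hline : HasDerivAt (fun s : ℝ => x + s • v) v t := by
    simpa using ((hasDerivAt_id t).smul_const v).const_add x
  rw [← fderiv_eval_single]
  exact (hasFDerivAt_eval p (x + t • v)).differentiableAt.hasFDerivAt.comp_hasDerivAt t hline

lemma eq_zero_of_eventually_eval_eq_zero {p : MvPolynomial (Fin d) ℝ} {x : Euc d}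
    (h : ∀ᶠ y : Euc d in 𝓝 x, eval y p = 0) : p = 0 := by
  have hzero := (analyticOnNhd_eval p).eqOn_zero_of_preconnected_of_eventuallyEq_zero
    isPreconnected_univ (mem_univ x) h
  exact MvPolynomial.funext fun v => by simpa using hzero (mem_univ (WithLp.toLp 2 v))

lemma eval_smul_of_isHomogeneous {σ R : Type*} [CommSemiring R] {p : MvPolynomial σ R} {k : ℕ}
    (hp : p.IsHomogeneous k) (t : R) (x : σ → R) : eval (t • x) p = t ^ k * eval x p := by
  rw [eval_eq, eval_eq, Finset.mul_sum]
  refine Finset.sum_congr rfl fun m hm => ?_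
  have hdeg : ∑ i ∈ m.support, m i = k := (hp.degree_eq_sum_deg_support hm).symm
  simp only [Pi.smul_apply, smul_eq_mul, mul_pow, Finset.prod_mul_distrib,
    Finset.prod_pow_eq_pow_sum, hdeg, mul_left_comm]

lemma laplacian_eq_of_contDiffAt {u : Euc d → ℝ} {x : Euc d} (hu : ContDiffAt ℝ 2 u x) :
    laplacian u x = (Δ u) x := by
  have hdiff : DifferentiableAt ℝ (fderiv ℝ u) x :=
    (hu.fderiv_right (m := 1) (by norm_num)).differentiableAt (by norm_num)
  simp only [laplacian_eq_iteratedFDeriv_orthonormalBasis u (EuclideanSpace.basisFun (Fin d) ℝ),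
    iteratedFDeriv_two_apply, laplacian, EuclideanSpace.basisFun_apply]
  refine Finset.sum_congr rfl fun i _ => ?_
  rw [fderiv_clm_apply hdiff (differentiableAt_const _)]
  simp

lemma laplacian_eval (p : MvPolynomial (Fin d) ℝ) (x : Euc d) :
    (Δ fun y : Euc d => eval y p) x = eval x (polyLaplacian p) := by
  rw [← laplacian_eq_of_contDiffAt (contDiff_eval p).contDiffAt, laplacian, polyLaplacian_apply,
    map_sum]
  simp only [fderiv_eval_single]

lemma harmonicOnNhd_eval {p : MvPolynomial (Fin d) ℝ} (hp : polyLaplacian p = 0)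
    (s : Set (Euc d)) : HarmonicOnNhd (fun x : Euc d => eval x p) s := fun _ _ =>
  ⟨(contDiff_eval p).contDiffAt, .of_forall fun y => by simp [laplacian_eval, hp]⟩

end PolynomialFunctions

/-! ### The maximum principle and the Dirichlet problem in the unit ball -/

section MaximumPrinciple

lemma deriv_deriv_nonpos_of_isLocalMax {f : ℝ → ℝ} {t : ℝ} (hmax : IsLocalMax f t)
    (hf : ContinuousAt f t) : deriv (deriv f) t ≤ 0 := by
  by_contra! hpos
  have hmin := isLocalMin_of_deriv_deriv_pos hpos hmax.deriv_eq_zero hf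
  have hconst : f =ᶠ[𝓝 t] fun _ => f t := by
    filter_upwards [hmin, hmax] with s hs hs' using le_antisymm hs' hs
  simp [hconst.deriv.deriv_eq] at hpos

lemma fderiv_fderiv_nonpos_of_isLocalMax {E : Type*} [NormedAddCommGroup E] [NormedSpace ℝ E]
    {v : E → ℝ} {x : E} (hv : ContDiffAt ℝ 2 v x) (hmax : IsLocalMax v x) (e : E) :
    fderiv ℝ (fderiv ℝ v) x e e ≤ 0 := by
  have hline (t : ℝ) : HasDerivAt (fun t : ℝ => x + t • e) e t := by
    simpa using ((hasDerivAt_id t).smul_const e).const_add x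
  have hlim : Tendsto (fun t : ℝ => x + t • e) (𝓝 0) (𝓝 x) := by
    simpa using (hline 0).continuousAt.tendsto
  have hderiv : deriv (fun t : ℝ => v (x + t • e)) =ᶠ[𝓝 0] fun t => fderiv ℝ v (x + t • e) e := by
    filter_upwards [hlim.eventually (hv.eventually (by simp))] with t ht
    exact ((ht.differentiableAt (by norm_num)).hasFDerivAt.comp_hasDerivAt t (hline t)).deriv
  have hderiv2 : deriv (deriv fun t : ℝ => v (x + t • e)) 0 = fderiv ℝ (fderiv ℝ v) x e e := by
    have hdiff : HasFDerivAt (fderiv ℝ v) (fderiv ℝ (fderiv ℝ v) x) (x + (0 : ℝ) • e) := by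
      simpa using ((hv.fderiv_right (m := 1) (by norm_num)).differentiableAt
        (by norm_num)).hasFDerivAt
    have hcomp : HasDerivAt (fun t : ℝ => fderiv ℝ v (x + t • e)) (fderiv ℝ (fderiv ℝ v) x e) 0 :=
      hdiff.comp_hasDerivAt 0 (hline 0)
    rw [hderiv.deriv_eq]
    simpa using (hcomp.clm_apply (hasDerivAt_const 0 e)).deriv
  rw [← hderiv2]
  refine deriv_deriv_nonpos_of_isLocalMax ?_ ?_
  · simpa [IsLocalMax, IsMaxFilter] using hlim.eventually hmax
  · exact hv.continuousAt.comp_of_eq (hline 0).continuousAt (by simp)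

variable {E : Type*} [NormedAddCommGroup E] [InnerProductSpace ℝ E] [FiniteDimensional ℝ E]

lemma laplacian_nonpos_of_isLocalMax {v : E → ℝ} {x : E} (hv : ContDiffAt ℝ 2 v x)
    (hmax : IsLocalMax v x) : (Δ v) x ≤ 0 := by
  rw [laplacian_eq_iteratedFDeriv_stdOrthonormalBasis]
  refine Finset.sum_nonpos fun i _ => ?_
  rw [iteratedFDeriv_two_apply]
  exact fderiv_fderiv_nonpos_of_isLocalMax hv hmax _

lemma exists_isMaxOn_diff_of_laplacian_pos {v : E → ℝ} {K U : Set E} (hK : IsCompact K)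
    (hne : K.Nonempty) (hU : IsOpen U) (hUK : U ⊆ K) (hc : ContinuousOn v K)
    (hv : ∀ x ∈ U, ContDiffAt ℝ 2 v x ∧ 0 < (Δ v) x) : ∃ z ∈ K \ U, IsMaxOn v K z := by
  obtain ⟨z, hzK, hmax⟩ := hK.exists_isMaxOn hne hc
  refine ⟨z, ⟨hzK, fun hzU => ?_⟩, hmax⟩
  have hloc : IsLocalMax v z := hmax.isLocalMax (mem_of_superset (hU.mem_nhds hzU) hUK)
  exact (laplacian_nonpos_of_isLocalMax (hv z hzU).1 hloc).not_gt (hv z hzU).2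

end MaximumPrinciple

section DirichletProblem

variable {d : ℕ}

lemma eval_nonpos_of_nonpos_on_sphere [NeZero d] {p : MvPolynomial (Fin d) ℝ}
    (hp : polyLaplacian p = 0) (hsphere : ∀ x : Euc d, ‖x‖ = 1 → eval x p ≤ 0) {x : Euc d}
    (hx : ‖x‖ ≤ 1) : eval x p ≤ 0 := by
  refine le_of_forall_pos_le_add fun ε hε => ?_
  set q := p + ε • normSqPoly (Fin d) ℝ with hq
  have heval (y : Euc d) : eval y q = eval y p + ε * ‖y‖ ^ 2 := by
    simp [hq, smul_eval, eval_normSqPoly]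
  obtain ⟨z, ⟨hz, hz'⟩, hmax⟩ := exists_isMaxOn_diff_of_laplacian_pos
    (v := fun y : Euc d => eval y q) (isCompact_closedBall 0 1) ⟨0, by simp⟩ isOpen_ball
    ball_subset_closedBall (continuous_eval q).continuousOn fun y _ => by
      refine ⟨(contDiff_eval q).contDiffAt, ?_⟩
      have hd : (0 : ℝ) < d := Nat.cast_pos.2 (NeZero.pos d)
      rw [laplacian_eval, hq, map_add, map_smul, hp, polyLaplacian_normSqPoly, zero_add,
        smul_eval, eval_C, Fintype.card_fin]
      positivity
  have hz1 : ‖z‖ = 1 := le_antisymm (by simpa using hz) (by simpa using hz')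
  have hle := hmax (show x ∈ closedBall (0 : Euc d) 1 by simpa using hx)
  simp only [mem_ofPred_eq, heval, hz1] at hle
  nlinarith [hsphere z hz1, mul_nonneg hε.le (sq_nonneg ‖x‖)]

lemma eval_eq_zero_of_eq_zero_on_sphere [NeZero d] {p : MvPolynomial (Fin d) ℝ}
    (hp : polyLaplacian p = 0) (hsphere : ∀ x : Euc d, ‖x‖ = 1 → eval x p = 0) {x : Euc d}
    (hx : ‖x‖ ≤ 1) : eval x p = 0 := by
  refine le_antisymm (eval_nonpos_of_nonpos_on_sphere hp (fun y hy => (hsphere y hy).le) hx) ?_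
  have hneg : eval x (-p) ≤ 0 := eval_nonpos_of_nonpos_on_sphere (by rw [map_neg, hp, neg_zero])
    (fun y hy => by simp [hsphere y hy]) hx
  simpa using hneg

lemma eq_zero_of_polyLaplacian_one_sub_normSqPoly_mul [NeZero d] {q : MvPolynomial (Fin d) ℝ}
    (hq : polyLaplacian ((1 - normSqPoly (Fin d) ℝ) * q) = 0) : q = 0 := by
  refine eq_zero_of_eventually_eval_eq_zero (x := 0) ?_
  filter_upwards [ball_mem_nhds (0 : Euc d) one_pos] with x hx
  rw [mem_ball_zero_iff] at hx
  have hprod : eval x ((1 - normSqPoly (Fin d) ℝ) * q) = 0 :=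
    eval_eq_zero_of_eq_zero_on_sphere hq (fun y hy => by simp [eval_normSqPoly, hy]) hx.le
  simp only [map_mul, map_sub, map_one, eval_normSqPoly] at hprod
  exact (mul_eq_zero.1 hprod).resolve_left (by nlinarith [norm_nonneg x])

-- Fischer: `q ↦ Δ((1 - |x|²) q)` preserves the polynomials of degree at most `m`, a finite
-- dimensional space, so being injective it is surjective.
lemma exists_harmonic_eval_eq_on_sphere [NeZero d] (p : MvPolynomial (Fin d) ℝ) :
    ∃ h : MvPolynomial (Fin d) ℝ,
      polyLaplacian h = 0 ∧ ∀ x : Euc d, ‖x‖ = 1 → eval x h = eval x p := by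
  let V := restrictTotalDegree (Fin d) ℝ p.totalDegree
  let T := polyLaplacian ∘ₗ LinearMap.mulLeft ℝ (1 - normSqPoly (Fin d) ℝ)
  have hT : ∀ q ∈ V, T q ∈ V := fun q hq => by
    rw [mem_restrictTotalDegree] at hq ⊢
    have h₁ : (T q).totalDegree ≤ _ := totalDegree_polyLaplacian_le _
    have h₂ := totalDegree_mul (1 - normSqPoly (Fin d) ℝ) q
    have h₃ : (1 - normSqPoly (Fin d) ℝ).totalDegree ≤ 2 :=
      (totalDegree_sub _ _).trans (by simp [totalDegree_normSqPoly_le])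
    simp only [LinearMap.mulLeft_apply] at h₁
    omega
  have hinj : Function.Injective (T.restrict hT) :=
    (injective_iff_map_eq_zero _).2 fun q hq => Subtype.ext <|
      eq_zero_of_polyLaplacian_one_sub_normSqPoly_mul (congrArg Subtype.val hq)
  have hmem : polyLaplacian p ∈ V := (mem_restrictTotalDegree _ _ _).2
    ((totalDegree_polyLaplacian_le p).trans (Nat.sub_le _ _))
  obtain ⟨q, hq⟩ := LinearMap.injective_iff_surjective.1 hinj ⟨polyLaplacian p, hmem⟩
  have hq' : polyLaplacian ((1 - normSqPoly (Fin d) ℝ) * (q : MvPolynomial (Fin d) ℝ)) =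
      polyLaplacian p := congrArg Subtype.val hq
  exact ⟨p - (1 - normSqPoly (Fin d) ℝ) * q, by rw [map_sub, hq', sub_self],
    fun x hx => by simp [eval_normSqPoly, hx]⟩

end DirichletProblem

lemma exists_polynomial_near_of_isCompact {d : ℕ} {K : Set (Euc d)} (hK : IsCompact K)
    {f : Euc d → ℝ} (hf : ContinuousOn f K) {ε : ℝ} (hε : 0 < ε) :
    ∃ p : MvPolynomial (Fin d) ℝ, ∀ x ∈ K, |eval x p - f x| < ε := by
  have : CompactSpace K := isCompact_iff_compactSpace.1 hK
  let coord (i : Fin d) : C(K, ℝ) := ⟨fun x => x.1 i, by fun_prop⟩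
  have heval (p : MvPolynomial (Fin d) ℝ) (x : K) : aeval coord p x = eval x.1 p := by
    induction p using MvPolynomial.induction_on <;> simp_all [coord]
  have hsep : (aeval (R := ℝ) coord).range.SeparatesPoints := by
    rintro x y hxy
    obtain ⟨i, hi⟩ : ∃ i, x.1 i ≠ y.1 i := by
      by_contra! heq
      exact hxy (Subtype.ext (PiLp.ext heq))
    exact ⟨coord i, ⟨coord i, ⟨X i, aeval_X _ _⟩, rfl⟩, hi⟩
  obtain ⟨⟨_, p, rfl⟩, hp⟩ :=
    ContinuousMap.exists_mem_subalgebra_near_continuous_of_separatesPoints _ hsep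
      (fun x : K => f x) (continuousOn_iff_continuous_domRestrict.1 hf) ε hε
  exact ⟨p, fun x hx => heval p ⟨x, hx⟩ ▸ hp ⟨x, hx⟩⟩

/-! ### Reflection in the flat face -/

section Reflection

variable {n : ℕ}

@[fun_prop]
lemma continuous_lastc : Continuous (lastc (n := n)) := by
  unfold lastc
  fun_prop

lemma abs_lastc_le_norm (x : Euc (n + 1)) : |lastc x| ≤ ‖x‖ := by
  simpa [lastc] using PiLp.norm_apply_le x (Fin.last n)

lemma lastc_add_smul_single (x : Euc (n + 1)) (t : ℝ) :
    lastc (x + t • EuclideanSpace.single (Fin.last n) 1) = lastc x + t := by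
  simp [lastc]

/-- The signs `(1, …, 1, -1)` of the reflection in `{y'' = 0}`. -/
def reflectSign (n : ℕ) (i : Fin (n + 1)) : ℝ := if i = Fin.last n then -1 else 1

lemma reflectSign_sq (i : Fin (n + 1)) : reflectSign n i ^ 2 = 1 := by
  unfold reflectSign
  split_ifs <;> norm_num

lemma reflectSign_last : reflectSign n (Fin.last n) = -1 := if_pos rfl

/-- The reflection `(y', y'') ↦ (y', -y'')`. -/
def reflectLast (n : ℕ) : Euc (n + 1) ≃ₗᵢ[ℝ] Euc (n + 1) :=
  LinearIsometryEquiv.piLpCongrRight 2 fun i : Fin (n + 1) =>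
    if i = Fin.last n then LinearIsometryEquiv.neg ℝ else LinearIsometryEquiv.refl ℝ ℝ

lemma reflectLast_apply (x : Euc (n + 1)) (i : Fin (n + 1)) :
    reflectLast n x i = reflectSign n i * x i := by
  simp only [reflectLast, reflectSign, LinearIsometryEquiv.piLpCongrRight_apply]
  split_ifs <;> simp

lemma reflectLast_reflectLast (x : Euc (n + 1)) : reflectLast n (reflectLast n x) = x := by
  ext i
  rw [reflectLast_apply, reflectLast_apply, ← mul_assoc, ← sq, reflectSign_sq, one_mul]

lemma lastc_reflectLast (x : Euc (n + 1)) : lastc (reflectLast n x) = -lastc x := by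
  simp [lastc, reflectLast_apply, reflectSign_last]

lemma reflectLast_eq_self {x : Euc (n + 1)} (hx : lastc x = 0) : reflectLast n x = x := by
  ext i
  obtain rfl | hi := eq_or_ne i (Fin.last n)
  · exact (lastc_reflectLast x).trans (by rw [hx, neg_zero]; exact hx.symm)
  · simp [reflectLast_apply, reflectSign, hi]

/-- The folding map `(y', y'') ↦ (y', |y''|)` onto the closed upper half space; composing with it
extends a function evenly across the flat face. -/
def foldLast (x : Euc (n + 1)) : Euc (n + 1) := if 0 ≤ lastc x then x else reflectLast n x

lemma continuous_foldLast : Continuous (foldLast (n := n)) :=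
  Continuous.if_le continuous_id (reflectLast n).continuous continuous_const continuous_lastc
    fun _ hx => (reflectLast_eq_self hx.symm).symm

lemma norm_foldLast (x : Euc (n + 1)) : ‖foldLast x‖ = ‖x‖ := by
  unfold foldLast
  split_ifs <;> simp

lemma lastc_foldLast_nonneg (x : Euc (n + 1)) : 0 ≤ lastc (foldLast x) := by
  unfold foldLast
  split_ifs with hx
  · exact hx
  · rw [lastc_reflectLast]
    linarith

lemma foldLast_of_nonneg {x : Euc (n + 1)} (hx : 0 ≤ lastc x) : foldLast x = x := if_pos hx

lemma foldLast_reflectLast_of_nonneg {x : Euc (n + 1)} (hx : 0 ≤ lastc x) :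
    foldLast (reflectLast n x) = x := by
  rw [foldLast, lastc_reflectLast, reflectLast_reflectLast]
  split_ifs with h
  · exact reflectLast_eq_self (by linarith)
  · rfl

/-- The substitution `X_last ↦ -X_last`. -/
def polyReflect (n : ℕ) : MvPolynomial (Fin (n + 1)) ℝ →ₐ[ℝ] MvPolynomial (Fin (n + 1)) ℝ :=
  diagAffineSubst (reflectSign n) 0

lemma eval_polyReflect (p : MvPolynomial (Fin (n + 1)) ℝ) (x : Euc (n + 1)) :
    eval x (polyReflect n p) = eval (reflectLast n x) p := by
  rw [polyReflect, eval_diagAffineSubst]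
  congr 2
  ext i
  simp [reflectLast_apply]

lemma coeff_polyReflect (p : MvPolynomial (Fin (n + 1)) ℝ) (m : Fin (n + 1) →₀ ℕ) :
    coeff m (polyReflect n p) = (m.prod fun i e => reflectSign n i ^ e) * coeff m p := by
  induction p using MvPolynomial.induction_on' with
  | add p q hp hq => rw [map_add, coeff_add, coeff_add, hp, hq, mul_add]
  | monomial u c =>
    have hu : polyReflect n (monomial u c) =
        monomial u ((u.prod fun i e => reflectSign n i ^ e) * c) := by
      simp only [polyReflect, diagAffineSubst, aeval_monomial, Pi.zero_apply, C_0, add_zero,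
        mul_pow, Finsupp.prod_mul, algebraMap_eq]
      rw [monomial_eq, C_mul, Finsupp.prod, Finsupp.prod, Finsupp.prod, map_prod]
      simp only [map_pow]
      ring
    rw [hu, coeff_monomial, coeff_monomial]
    split_ifs with h
    · rw [h]
    · rw [mul_zero]

lemma polyReflect_homogeneousComponent (k : ℕ) (p : MvPolynomial (Fin (n + 1)) ℝ) :
    polyReflect n (homogeneousComponent k p) = homogeneousComponent k (polyReflect n p) := by
  ext m
  simp only [coeff_polyReflect, coeff_homogeneousComponent, mul_ite, mul_zero]

lemma polyReflect_polyReflect (p : MvPolynomial (Fin (n + 1)) ℝ) :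
    polyReflect n (polyReflect n p) = p := by
  refine sub_eq_zero.1 (eq_zero_of_eventually_eval_eq_zero (x := 0) ?_)
  filter_upwards with x
  rw [map_sub, eval_polyReflect, eval_polyReflect, reflectLast_reflectLast, sub_self]

/-- The harmonic polynomials that are even in the last variable. -/
def evenHarmonic (n : ℕ) : Submodule ℝ (MvPolynomial (Fin (n + 1)) ℝ) :=
  LinearMap.ker polyLaplacian ⊓ LinearMap.eqLocus (polyReflect n).toLinearMap LinearMap.id

lemma mem_evenHarmonic {p : MvPolynomial (Fin (n + 1)) ℝ} :
    p ∈ evenHarmonic n ↔ polyLaplacian p = 0 ∧ polyReflect n p = p := Iff.rfl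

lemma polyLaplacian_eq_zero_of_mem_evenHarmonic {p : MvPolynomial (Fin (n + 1)) ℝ}
    (hp : p ∈ evenHarmonic n) : polyLaplacian p = 0 := hp.1

lemma eval_reflectLast_of_mem_evenHarmonic {p : MvPolynomial (Fin (n + 1)) ℝ}
    (hp : p ∈ evenHarmonic n) (x : Euc (n + 1)) : eval (reflectLast n x) p = eval x p := by
  rw [← eval_polyReflect, (mem_evenHarmonic.1 hp).2]

lemma homogeneousComponent_mem_evenHarmonic {p : MvPolynomial (Fin (n + 1)) ℝ}
    (hp : p ∈ evenHarmonic n) (k : ℕ) : homogeneousComponent k p ∈ evenHarmonic n :=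
  mem_evenHarmonic.2 ⟨polyLaplacian_homogeneousComponent_eq_zero hp.1 k, by
    rw [polyReflect_homogeneousComponent, (mem_evenHarmonic.1 hp).2]⟩

lemma symmetrization_mem_evenHarmonic {p : MvPolynomial (Fin (n + 1)) ℝ}
    (hp : polyLaplacian p = 0) : (1 / 2 : ℝ) • (p + polyReflect n p) ∈ evenHarmonic n := by
  refine mem_evenHarmonic.2 ⟨?_, ?_⟩
  · rw [map_smul, map_add, polyReflect, polyLaplacian_diagAffineSubst reflectSign_sq, hp, map_zero,
      add_zero, smul_zero]
  · rw [map_smul, map_add, polyReflect_polyReflect, add_comm p]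

lemma eval_pderiv_last_eq_zero {p : MvPolynomial (Fin (n + 1)) ℝ} (hp : p ∈ evenHarmonic n)
    {x : Euc (n + 1)} (hx : lastc x = 0) : eval x (pderiv (Fin.last n) p) = 0 := by
  have hodd : pderiv (Fin.last n) p = C (-1) * polyReflect n (pderiv (Fin.last n) p) := by
    rw [← reflectSign_last, polyReflect, ← pderiv_diagAffineSubst]
    exact congrArg _ (mem_evenHarmonic.1 hp).2.symm
  have heval := congrArg (eval x) hodd
  rw [map_mul, eval_C, eval_polyReflect, reflectLast_eq_self hx] at heval
  linarith

end Reflection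

/-! ### The Neumann problem in the half ball -/

section NeumannProblem

variable {n : ℕ}

lemma isOpen_unitHalfBall : IsOpen (unitHalfBall n) :=
  (isOpen_lt continuous_norm continuous_const).inter (isOpen_lt continuous_const continuous_lastc)

lemma closure_unitHalfBall : closure (unitHalfBall n) = {y | ‖y‖ ≤ 1 ∧ 0 ≤ lastc y} := by
  refine Subset.antisymm (closure_minimal (fun y hy => ⟨hy.1.le, hy.2.le⟩) ?_) fun y hy => ?_
  · exact (isClosed_le continuous_norm continuous_const).inter
      (isClosed_le continuous_const continuous_lastc)
  set e : Euc (n + 1) := EuclideanSpace.single (Fin.last n) 1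
  have hpath : Tendsto (fun t : ℝ => (1 - t) • y + (t / 2) • e) (𝓝[>] 0) (𝓝 y) := by
    have hcont : Continuous fun t : ℝ => (1 - t) • y + (t / 2) • e := by fun_prop
    simpa using (hcont.tendsto 0).mono_left nhdsWithin_le_nhds
  refine mem_closure_of_tendsto hpath ?_
  filter_upwards [Ioo_mem_nhdsGT one_pos] with t ht
  constructor
  · calc ‖(1 - t) • y + (t / 2) • e‖ ≤ ‖(1 - t) • y‖ + ‖(t / 2) • e‖ := norm_add_le _ _
      _ = (1 - t) * ‖y‖ + t / 2 := by
        rw [norm_smul, norm_smul, PiLp.norm_single, norm_one, mul_one,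
          Real.norm_of_nonneg (by linarith [ht.2]), Real.norm_of_nonneg (by linarith [ht.1])]
      _ < 1 := by nlinarith [ht.1, ht.2, hy.1]
  · have hlast : lastc ((1 - t) • y) = (1 - t) * lastc y := rfl
    rw [lastc_add_smul_single, hlast]
    nlinarith [ht.1, ht.2, hy.2]

lemma mem_closure_unitHalfBall {y : Euc (n + 1)} :
    y ∈ closure (unitHalfBall n) ↔ ‖y‖ ≤ 1 ∧ 0 ≤ lastc y := by
  rw [closure_unitHalfBall, mem_ofPred_eq]

lemma isCompact_closure_unitHalfBall : IsCompact (closure (unitHalfBall n)) :=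
  (isCompact_closedBall (0 : Euc (n + 1)) 1).of_isClosed_subset isClosed_closure fun y hy => by
    simpa using (mem_closure_unitHalfBall.1 hy).1

/-- `u` solves the Neumann problem in the half ball: it is continuous on `B̄₊`, harmonic in `B₊`,
and its normal derivative vanishes on the flat face. -/
structure IsNeumannSolution (u : Euc (n + 1) → ℝ) : Prop where
  continuousOn : ContinuousOn u (closure (unitHalfBall n))
  harmonicOnNhd : HarmonicOnNhd u (unitHalfBall n)
  exists_hasFDerivWithinAt : ∀ y ∈ flatFace n, ∃ L : Euc (n + 1) →L[ℝ] ℝ,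
    HasFDerivWithinAt u L (closure (unitHalfBall n)) y ∧
      L (EuclideanSpace.single (Fin.last n) 1) = 0

lemma IsNeumannSolution.sub {u v : Euc (n + 1) → ℝ} (hu : IsNeumannSolution u)
    (hv : IsNeumannSolution v) : IsNeumannSolution (u - v) where
  continuousOn := hu.continuousOn.sub hv.continuousOn
  harmonicOnNhd := hu.harmonicOnNhd.sub hv.harmonicOnNhd
  exists_hasFDerivWithinAt y hy := by
    obtain ⟨L, hL, hL0⟩ := hu.exists_hasFDerivWithinAt y hy
    obtain ⟨L', hL', hL'0⟩ := hv.exists_hasFDerivWithinAt y hy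
    exact ⟨L - L', hL.sub hL', by rw [sub_apply, hL0, hL'0, sub_zero]⟩

lemma isNeumannSolution_eval {p : MvPolynomial (Fin (n + 1)) ℝ} (hp : p ∈ evenHarmonic n) :
    IsNeumannSolution fun x : Euc (n + 1) => eval x p where
  continuousOn := (continuous_eval p).continuousOn
  harmonicOnNhd := harmonicOnNhd_eval (polyLaplacian_eq_zero_of_mem_evenHarmonic hp) _
  exists_hasFDerivWithinAt y hy :=
    ⟨_, ((contDiff_eval p).differentiable one_ne_zero y).hasFDerivAt.hasFDerivWithinAt, by
      rw [fderiv_eval_single, eval_pderiv_last_eq_zero hp hy.2]⟩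

lemma isNeumannSolution_of_harmonicOn {g : Euc (n + 1) → ℝ}
    (hc : ContinuousOn g (closure (unitHalfBall n))) (hg : HarmonicOn g (unitHalfBall n))
    (hflat : ∀ y ∈ flatFace n, DifferentiableWithinAt ℝ g (closure (unitHalfBall n)) y ∧
      fderivWithin ℝ g (closure (unitHalfBall n)) y (EuclideanSpace.single (Fin.last n) 1) = 0) :
    IsNeumannSolution g where
  continuousOn := hc
  harmonicOnNhd x hx := by
    have hsmooth : ∀ y ∈ unitHalfBall n, ContDiffAt ℝ 2 g y :=
      fun y hy => hg.1.contDiffAt (isOpen_unitHalfBall.mem_nhds hy)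
    refine ⟨hsmooth x hx, ?_⟩
    filter_upwards [isOpen_unitHalfBall.mem_nhds hx] with y hy
    rw [← laplacian_eq_of_contDiffAt (hsmooth y hy), hg.2 y hy, Pi.zero_apply]
  exists_hasFDerivWithinAt y hy := ⟨_, (hflat y hy).1.hasFDerivWithinAt, (hflat y hy).2⟩

/-- The barrier `δ (y'' + |y|²)`: it has positive Laplacian, and its derivative into the half ball
is positive on the flat face. -/
def neumannBarrier (n : ℕ) (δ : ℝ) : MvPolynomial (Fin (n + 1)) ℝ :=
  δ • (X (Fin.last n) + normSqPoly (Fin (n + 1)) ℝ)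

lemma eval_neumannBarrier (δ : ℝ) (y : Euc (n + 1)) :
    eval y (neumannBarrier n δ) = δ * (lastc y + ‖y‖ ^ 2) := by
  rw [neumannBarrier, smul_eval, map_add, eval_X, eval_normSqPoly]
  rfl

lemma laplacian_neumannBarrier_pos {δ : ℝ} (hδ : 0 < δ) (y : Euc (n + 1)) :
    0 < (Δ fun y : Euc (n + 1) => eval y (neumannBarrier n δ)) y := by
  rw [laplacian_eval, neumannBarrier, map_smul, map_add, polyLaplacian_normSqPoly,
    polyLaplacian_eq_zero_of_totalDegree_le_one (totalDegree_X _).le, zero_add, smul_eval, eval_C,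
    Fintype.card_fin]
  positivity

lemma fderiv_neumannBarrier {δ : ℝ} {y : Euc (n + 1)} (hy : lastc y = 0) :
    fderiv ℝ (fun y : Euc (n + 1) => eval y (neumannBarrier n δ)) y
      (EuclideanSpace.single (Fin.last n) 1) = δ := by
  have hy' : y (Fin.last n) = 0 := hy
  rw [fderiv_eval_single, neumannBarrier, Derivation.map_smul, map_add, pderiv_normSqPoly,
    pderiv_X_self, smul_eval]
  simp [hy']

lemma single_last_mem_posTangentConeAt {z : Euc (n + 1)} (hz : ‖z‖ < 1) (hz' : lastc z = 0) :
    EuclideanSpace.single (Fin.last n) 1 ∈ posTangentConeAt (closure (unitHalfBall n)) z := by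
  refine mem_posTangentConeAt_of_frequently_mem (Eventually.frequently ?_)
  have hcont : Continuous fun t : ℝ => ‖z + t • EuclideanSpace.single (Fin.last n) (1 : ℝ)‖ := by
    fun_prop
  have hnorm := (hcont.tendsto 0).eventually_lt_const (u := 1) (by simpa using hz)
  filter_upwards [nhdsWithin_le_nhds hnorm, self_mem_nhdsWithin] with t ht ht0
  refine mem_closure_unitHalfBall.2 ⟨le_of_lt ht, ?_⟩
  rw [lastc_add_smul_single, hz', zero_add]
  exact le_of_lt ht0

lemma IsNeumannSolution.not_isMaxOn_add_barrier {u : Euc (n + 1) → ℝ} (hu : IsNeumannSolution u)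
    {δ : ℝ} (hδ : 0 < δ) {z : Euc (n + 1)} (hz : ‖z‖ < 1) (hz' : lastc z = 0) :
    ¬ IsMaxOn (fun y => u y + eval y (neumannBarrier n δ)) (closure (unitHalfBall n)) z := by
  intro hmax
  obtain ⟨L, hL, hL0⟩ := hu.exists_hasFDerivWithinAt z ⟨hz.le, hz'⟩
  have hbarrier := ((contDiff_eval (neumannBarrier n δ)).differentiable one_ne_zero
    z).hasFDerivAt.hasFDerivWithinAt (s := closure (unitHalfBall n))
  have hle := hmax.localize.hasFDerivWithinAt_nonpos (hL.add hbarrier)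
    (single_last_mem_posTangentConeAt hz hz')
  rw [add_apply, hL0, zero_add, fderiv_neumannBarrier hz'] at hle
  exact hle.not_gt hδ

lemma IsNeumannSolution.le_of_le_on_cap {u : Euc (n + 1) → ℝ} (hu : IsNeumannSolution u) {a : ℝ}
    (hcap : ∀ y, ‖y‖ = 1 → 0 ≤ lastc y → u y ≤ a) {y : Euc (n + 1)}
    (hy : y ∈ closure (unitHalfBall n)) : u y ≤ a := by
  refine le_of_forall_pos_le_add fun δ hδ => ?_
  obtain ⟨z, ⟨hz, hzint⟩, hmax⟩ := exists_isMaxOn_diff_of_laplacian_pos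
    (v := u + fun y : Euc (n + 1) => eval y (neumannBarrier n (δ / 2)))
    isCompact_closure_unitHalfBall ⟨y, hy⟩ isOpen_unitHalfBall subset_closure
    (hu.continuousOn.add (continuous_eval _).continuousOn)
    fun x hx => by
      have hbarrier : ContDiffAt ℝ 2 (fun y : Euc (n + 1) => eval y (neumannBarrier n (δ / 2))) x :=
        (contDiff_eval _).contDiffAt
      refine ⟨(hu.harmonicOnNhd x hx).1.add hbarrier, ?_⟩
      rw [(hu.harmonicOnNhd x hx).1.laplacian_add hbarrier,
        (hu.harmonicOnNhd x hx).2.eq_of_nhds, Pi.zero_apply, zero_add]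
      exact laplacian_neumannBarrier_pos (half_pos hδ) x
  obtain ⟨hz1, hz0⟩ := mem_closure_unitHalfBall.1 hz
  have hznorm : ‖z‖ = 1 := by
    by_contra hne
    have hzlt : ‖z‖ < 1 := lt_of_le_of_ne hz1 hne
    have hzflat : lastc z = 0 := le_antisymm (not_lt.1 fun hpos => hzint ⟨hzlt, hpos⟩) hz0
    exact hu.not_isMaxOn_add_barrier (half_pos hδ) hzlt hzflat hmax
  have hle := hmax hy
  simp only [mem_ofPred_eq, Pi.add_apply, eval_neumannBarrier, hznorm] at hle
  have hzlast : lastc z ≤ 1 := hznorm ▸ (le_abs_self _).trans (abs_lastc_le_norm z)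
  have hylast := (mem_closure_unitHalfBall.1 hy).2
  nlinarith [hcap z hznorm hz0, mul_nonneg hδ.le (sq_nonneg ‖y‖), mul_nonneg hδ.le hylast]

lemma IsNeumannSolution.abs_le_of_abs_le_on_cap {u : Euc (n + 1) → ℝ} (hu : IsNeumannSolution u)
    {a : ℝ} (hcap : ∀ y, ‖y‖ = 1 → 0 ≤ lastc y → |u y| ≤ a) {y : Euc (n + 1)}
    (hy : y ∈ closure (unitHalfBall n)) : |u y| ≤ a := by
  have hzero : IsNeumannSolution fun _ : Euc (n + 1) => (0 : ℝ) := by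
    simpa using isNeumannSolution_eval (evenHarmonic n).zero_mem
  refine abs_le'.2 ⟨hu.le_of_le_on_cap (fun z h1 h0 => (le_abs_self _).trans (hcap z h1 h0)) hy, ?_⟩
  simpa using (hzero.sub hu).le_of_le_on_cap (a := a)
    (fun z h1 h0 => by simpa using (neg_le_abs _).trans (hcap z h1 h0)) hy

lemma IsNeumannSolution.exists_evenHarmonic_near {g : Euc (n + 1) → ℝ} (hg : IsNeumannSolution g)
    {ε : ℝ} (hε : 0 < ε) :
    ∃ h ∈ evenHarmonic n, ∀ y ∈ closure (unitHalfBall n), |g y - eval y h| ≤ ε := by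
  have hext : ContinuousOn (fun y => g (foldLast y)) (sphere 0 1) :=
    hg.continuousOn.comp continuous_foldLast.continuousOn fun y hy => mem_closure_unitHalfBall.2
      ⟨by rw [norm_foldLast, mem_sphere_zero_iff_norm.1 hy], lastc_foldLast_nonneg y⟩
  obtain ⟨p, hp⟩ := exists_polynomial_near_of_isCompact (isCompact_sphere 0 1) hext hε
  obtain ⟨h, hh, hhp⟩ := exists_harmonic_eval_eq_on_sphere p
  have hmem := symmetrization_mem_evenHarmonic (n := n) hh
  refine ⟨_, hmem, fun y hy =>
    (hg.sub (isNeumannSolution_eval hmem)).abs_le_of_abs_le_on_cap (fun z hz hz0 => ?_) hy⟩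
  have hreflect : ‖reflectLast n z‖ = 1 := by rw [LinearIsometryEquiv.norm_map, hz]
  have h₁ := hp z (by simpa using hz)
  have h₂ := hp (reflectLast n z) (by simpa using hreflect)
  rw [foldLast_of_nonneg hz0] at h₁
  rw [foldLast_reflectLast_of_nonneg hz0] at h₂
  simp only [Pi.sub_apply, smul_eval, map_add, eval_polyReflect, hhp z hz, hhp _ hreflect]
  rw [abs_lt] at h₁ h₂
  exact abs_le.2 ⟨by linarith, by linarith⟩

end NeumannProblem

/-! ### Weighted orthogonality of harmonic polynomials -/

section WeightedForm

variable {d : ℕ}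

/-- The weight `(R² - |y|²)₊`. Its square is `C¹`, so that one may integrate by parts over the ball
of radius `R` without boundary terms and without spherical integrals. -/
def ballWeight (R : ℝ) (y : Euc d) : ℝ := max (R ^ 2 - ‖y‖ ^ 2) 0

lemma ballWeight_nonneg (R : ℝ) (y : Euc d) : 0 ≤ ballWeight R y := le_max_right _ _

@[fun_prop]
lemma continuous_ballWeight (R : ℝ) : Continuous (ballWeight (d := d) R) := by
  unfold ballWeight
  fun_prop

lemma ballWeight_eq_zero {R : ℝ} {y : Euc d} (hy : |R| ≤ ‖y‖) : ballWeight R y = 0 :=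
  max_eq_right (sub_nonpos.2 (sq_le_sq.2 (by rwa [abs_norm])))

lemma hasCompactSupport_ballWeight (R : ℝ) : HasCompactSupport (ballWeight (d := d) R) :=
  HasCompactSupport.intro (isCompact_closedBall 0 |R|) fun y hy =>
    ballWeight_eq_zero (by simpa using (not_le.1 (mem_closedBall_zero_iff.not.1 hy)).le)

lemma integrable_ballWeight_mul (R : ℝ) {f : Euc d → ℝ} (hf : Continuous f) :
    Integrable fun y => ballWeight R y * f y :=
  ((continuous_ballWeight R).mul hf).integrable_of_hasCompactSupport
    (hasCompactSupport_ballWeight R).mul_right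

lemma integrable_ballWeight (R : ℝ) : Integrable (ballWeight (d := d) R) :=
  (continuous_ballWeight R).integrable_of_hasCompactSupport (hasCompactSupport_ballWeight R)

lemma hasDerivAt_max_zero_sq (t : ℝ) : HasDerivAt (fun t : ℝ => max t 0 ^ 2) (2 * max t 0) t := by
  rcases lt_trichotomy t 0 with ht | rfl | ht
  · have hzero : (fun s : ℝ => max s 0 ^ 2) =ᶠ[𝓝 t] fun _ => 0 := by
      filter_upwards [eventually_lt_nhds ht] with s hs
      rw [max_eq_right hs.le, sq, mul_zero]
    rw [max_eq_right ht.le, mul_zero]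
    exact (hasDerivAt_const t (0 : ℝ)).congr_of_eventuallyEq hzero
  · have hsq : (fun x : ℝ => x ^ 2) =o[𝓝 0] fun x => x := by
      simpa using isLittleO_pow_id (𝕜 := ℝ) one_lt_two
    have hle : (fun x : ℝ => max x 0 ^ 2) =O[𝓝 0] fun x => x ^ 2 :=
      isBigO_of_le _ fun x => by
        rw [norm_pow, norm_pow]
        refine pow_le_pow_left₀ (norm_nonneg _) ?_ 2
        rw [Real.norm_of_nonneg (le_max_right x 0), Real.norm_eq_abs]
        exact max_le (le_abs_self x) (abs_nonneg x)
    simpa [hasDerivAt_iff_isLittleO] using hle.trans_isLittleO hsq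
  · have hsq : (fun s : ℝ => max s 0 ^ 2) =ᶠ[𝓝 t] fun s => s ^ 2 := by
      filter_upwards [eventually_gt_nhds ht] with s hs
      rw [max_eq_left hs.le]
    rw [max_eq_left ht.le]
    exact (by simpa using hasDerivAt_pow 2 t : HasDerivAt _ _ t).congr_of_eventuallyEq hsq

lemma hasFDerivAt_ballWeight_sq (R : ℝ) (y : Euc d) :
    HasFDerivAt (fun y : Euc d => ballWeight R y ^ 2)
      ((-4 * ballWeight R y) • innerSL ℝ y) y := by
  have hinner : HasFDerivAt (fun y : Euc d => R ^ 2 - ‖y‖ ^ 2) (-(2 • innerSL ℝ y)) y :=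
    (hasStrictFDerivAt_norm_sq y).hasFDerivAt.const_sub _
  refine ((hasDerivAt_max_zero_sq _).comp_hasFDerivAt y hinner).congr_fderiv ?_
  ext v
  simp only [ballWeight, smul_apply, neg_apply, smul_eq_mul, nsmul_eq_mul]
  push_cast
  ring

lemma fderiv_ballWeight_sq_single (R : ℝ) (y : Euc d) (i : Fin d) :
    fderiv ℝ (fun y : Euc d => ballWeight R y ^ 2) y (EuclideanSpace.single i 1) =
      -(4 * (ballWeight R y * y i)) := by
  rw [(hasFDerivAt_ballWeight_sq R y).fderiv, smul_apply, innerSL_apply_apply, smul_eq_mul,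
    EuclideanSpace.inner_single_right]
  simp
  ring

/-- The bilinear form `(p, q) ↦ ∫ (R² - |y|²)₊ p(y) q(y) dy` on polynomials. -/
def weightedForm (R : ℝ) : LinearMap.BilinForm ℝ (MvPolynomial (Fin d) ℝ) :=
  have hint (p q : MvPolynomial (Fin d) ℝ) :
      Integrable fun y : Euc d => ballWeight R y * (eval y p * eval y q) :=
    integrable_ballWeight_mul R (by fun_prop)
  LinearMap.mk₂ ℝ (fun p q => ∫ y : Euc d, ballWeight R y * (eval y p * eval y q))
    (fun p p' q => by
      simp only [map_add, add_mul, mul_add]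
      exact integral_add (hint p q) (hint p' q))
    (fun c p q => by
      simp only [smul_eval, mul_assoc, mul_left_comm _ c]
      exact integral_const_mul c _)
    (fun p q q' => by
      simp only [map_add, mul_add]
      exact integral_add (hint p q) (hint p q'))
    (fun c p q => by
      simp only [smul_eval, mul_left_comm _ c]
      exact integral_const_mul c _)

lemma weightedForm_apply (R : ℝ) (p q : MvPolynomial (Fin d) ℝ) :
    weightedForm R p q = ∫ y : Euc d, ballWeight R y * (eval y p * eval y q) := rfl

lemma weightedForm_comm (R : ℝ) (p q : MvPolynomial (Fin d) ℝ) :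
    weightedForm R p q = weightedForm R q p := by
  simp only [weightedForm_apply, mul_comm (eval _ p)]

lemma weightedForm_mul_left (R : ℝ) (a b c : MvPolynomial (Fin d) ℝ) :
    weightedForm R (a * b) c = weightedForm R a (b * c) := by
  simp only [weightedForm_apply, map_mul, mul_assoc]

lemma weightedForm_self_nonneg (R : ℝ) (p : MvPolynomial (Fin d) ℝ) : 0 ≤ weightedForm R p p :=
  integral_nonneg fun y => mul_nonneg (ballWeight_nonneg R y) (mul_self_nonneg _)

lemma integral_ballWeight_sq_mul_pderiv (R : ℝ) (i : Fin d) (p : MvPolynomial (Fin d) ℝ) :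
    ∫ y : Euc d, ballWeight R y ^ 2 * eval y (pderiv i p) = 4 * weightedForm R (X i) p := by
  have hparts := integral_mul_fderiv_eq_neg_fderiv_mul_of_integrable (μ := volume)
    (f := fun y : Euc d => ballWeight R y ^ 2) (g := fun y : Euc d => eval y p)
    (v := EuclideanSpace.single i 1) ?_ ?_ ?_
    (fun y _ => (hasFDerivAt_ballWeight_sq R y).differentiableAt)
    (fun y _ => (hasFDerivAt_eval p y).differentiableAt)
  · simp only [fderiv_eval_single, fderiv_ballWeight_sq_single, neg_mul, integral_neg, neg_neg]
      at hparts
    rw [hparts, weightedForm_apply, ← integral_const_mul]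
    simp only [eval_X, mul_assoc]
  · simp only [fderiv_ballWeight_sq_single, neg_mul, mul_assoc]
    exact ((integrable_ballWeight_mul R (by fun_prop)).const_mul 4).neg
  · simp only [fderiv_eval_single, sq, mul_assoc]
    exact integrable_ballWeight_mul R (by fun_prop)
  · simp only [sq, mul_assoc]
    exact integrable_ballWeight_mul R (by fun_prop)

lemma sum_weightedForm_X_eq_zero (R : ℝ) {F : Fin d → MvPolynomial (Fin d) ℝ}
    (hF : ∑ i, pderiv i (F i) = 0) : ∑ i, weightedForm R (X i) (F i) = 0 := by
  have hint (i : Fin d) :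
      Integrable fun y : Euc d => ballWeight R y ^ 2 * eval y (pderiv i (F i)) := by
    simp only [sq, mul_assoc]
    exact integrable_ballWeight_mul R (by fun_prop)
  have hzero : 4 * ∑ i, weightedForm R (X i) (F i) = 0 := by
    simp only [Finset.mul_sum, ← integral_ballWeight_sq_mul_pderiv]
    rw [← integral_finsetSum _ fun i _ => hint i]
    simp only [← Finset.mul_sum, ← map_sum, hF, map_zero, mul_zero, integral_zero]
  linarith

lemma weightedForm_sum_X_mul_pderiv_comm (R : ℝ) {p q : MvPolynomial (Fin d) ℝ}
    (hp : polyLaplacian p = 0) (hq : polyLaplacian q = 0) :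
    weightedForm R p (∑ i, X i * pderiv i q) = weightedForm R q (∑ i, X i * pderiv i p) := by
  have hdiv : ∑ i, pderiv i (p * pderiv i q - q * pderiv i p) = 0 := by
    calc ∑ i, pderiv i (p * pderiv i q - q * pderiv i p)
        = ∑ i, (p * pderiv i (pderiv i q) - q * pderiv i (pderiv i p)) :=
          Finset.sum_congr rfl fun i _ => by rw [map_sub, pderiv_mul, pderiv_mul]; ring
      _ = p * polyLaplacian q - q * polyLaplacian p := by
          simp only [polyLaplacian_apply, Finset.mul_sum, Finset.sum_sub_distrib]
      _ = 0 := by rw [hp, hq, mul_zero, mul_zero, sub_zero]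
  have hmove (a b : MvPolynomial (Fin d) ℝ) (i : Fin d) :
      weightedForm R a (X i * b) = weightedForm R (X i) (a * b) := by
    rw [← weightedForm_mul_left, mul_comm a, weightedForm_mul_left]
  have hsum := sum_weightedForm_X_eq_zero R hdiv
  simp only [map_sub, Finset.sum_sub_distrib] at hsum
  simp only [map_sum, hmove]
  exact sub_eq_zero.1 hsum

lemma weightedForm_eq_zero_of_isHomogeneous (R : ℝ) {p q : MvPolynomial (Fin d) ℝ} {j k : ℕ}
    (hp : polyLaplacian p = 0) (hq : polyLaplacian q = 0) (hpj : p.IsHomogeneous j)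
    (hqk : q.IsHomogeneous k) (hjk : j ≠ k) : weightedForm R p q = 0 := by
  have hgreen := weightedForm_sum_X_mul_pderiv_comm R hp hq
  rw [hpj.sum_X_mul_pderiv, hqk.sum_X_mul_pderiv, map_nsmul, map_nsmul, weightedForm_comm R q p,
    nsmul_eq_mul, nsmul_eq_mul] at hgreen
  by_contra hne
  exact hjk (Nat.cast_injective (mul_right_cancel₀ hne hgreen)).symm

lemma sum_range_homogeneousComponent {σ R : Type*} [CommSemiring R] {p : MvPolynomial σ R} {m : ℕ}
    (hm : p.totalDegree < m) : ∑ j ∈ Finset.range m, homogeneousComponent j p = p := by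
  conv_rhs => rw [← sum_homogeneousComponent p]
  refine (Finset.sum_subset (Finset.range_mono hm) fun j _ hj => ?_).symm
  exact homogeneousComponent_eq_zero _ _ (by simpa [Nat.lt_succ_iff] using hj)

lemma weightedForm_homogeneousComponent (R : ℝ) {p q : MvPolynomial (Fin d) ℝ} {k : ℕ}
    (hp : polyLaplacian p = 0) (hq : polyLaplacian q = 0) (hqk : q.IsHomogeneous k) :
    weightedForm R q (homogeneousComponent k p) = weightedForm R q p := by
  have hsum := sum_range_homogeneousComponent (p := p) (m := p.totalDegree + k + 1) (by omega)
  have hk : k ∈ Finset.range (p.totalDegree + k + 1) := Finset.mem_range.2 (by omega)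
  conv_rhs => rw [← hsum, map_sum]
  symm
  refine Finset.sum_eq_single_of_mem k hk fun j _ hj => ?_
  exact weightedForm_eq_zero_of_isHomogeneous R hq (polyLaplacian_homogeneousComponent_eq_zero hp j)
    hqk (homogeneousComponent_isHomogeneous j p) hj.symm

lemma weightedForm_homogeneousComponent_self_le (R : ℝ) {p : MvPolynomial (Fin d) ℝ}
    (hp : polyLaplacian p = 0) (k : ℕ) :
    weightedForm R (homogeneousComponent k p) (homogeneousComponent k p) ≤ weightedForm R p p := by
  have hproj := weightedForm_homogeneousComponent R hp
    (polyLaplacian_homogeneousComponent_eq_zero hp k) (homogeneousComponent_isHomogeneous k p)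
  have hnonneg := weightedForm_self_nonneg R (p - homogeneousComponent k p)
  simp only [map_sub, LinearMap.sub_apply, weightedForm_comm R p (homogeneousComponent k p)]
    at hnonneg
  linarith

-- The mean value property: constants are orthogonal to all components of `p (· + a)` of positive
-- degree.
lemma eval_mul_integral_ballWeight (s : ℝ) {p : MvPolynomial (Fin d) ℝ} (hp : polyLaplacian p = 0)
    (a : Euc d) :
    eval a p * ∫ y : Euc d, ballWeight s y = ∫ z : Euc d, ballWeight s (z - a) * eval z p := by
  set q := diagAffineSubst 1 a p with hq_def
  have hq (y : Euc d) : eval y q = eval (y + a) p := by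
    rw [hq_def, eval_diagAffineSubst]
    congr 2
    ext i
    simp
  have hlap : polyLaplacian q = 0 := by
    rw [hq_def, polyLaplacian_diagAffineSubst (by simp), hp, map_zero]
  have hone : polyLaplacian (1 : MvPolynomial (Fin d) ℝ) = 0 :=
    polyLaplacian_eq_zero_of_totalDegree_le_one (by simp)
  have hconst (y : Euc d) : eval y (homogeneousComponent 0 q) = eval a p := by
    have h0 : eval (0 : Euc d) q = coeff 0 q := congrArg (· q) eval_zero
    rw [homogeneousComponent_zero, eval_C, ← h0, hq, zero_add]
  have hproj := weightedForm_homogeneousComponent s hlap hone (isHomogeneous_one _ _)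
  simp only [weightedForm_apply, map_one, one_mul, hconst, hq] at hproj
  rw [integral_mul_const, mul_comm] at hproj
  rw [hproj, ← integral_sub_right_eq_self (fun y : Euc d => ballWeight s y * eval (⇑(y + a)) p) a]
  simp only [sub_add_cancel]

end WeightedForm

/-! ### Interior estimates -/

section InteriorEstimates

variable {d : ℕ}

lemma integral_ballWeight_pos {R : ℝ} (hR : R ≠ 0) : 0 < ∫ y : Euc d, ballWeight R y := by
  refine (continuous_ballWeight R).integral_pos_of_hasCompactSupport_nonneg_nonzero
    (hasCompactSupport_ballWeight R) (ballWeight_nonneg R) (x := 0) ?_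
  rw [ballWeight, norm_zero, max_eq_left (by simpa using sq_nonneg R)]
  simpa using hR

lemma ballWeight_le (R : ℝ) (y : Euc d) : ballWeight R y ≤ R ^ 2 :=
  max_le (sub_le_self _ (sq_nonneg _)) (sq_nonneg R)

lemma ballWeight_eq_sub_min_sq {R : ℝ} (hR : 0 ≤ R) (y : Euc d) :
    ballWeight R y = R ^ 2 - min ‖y‖ R ^ 2 := by
  rcases le_total ‖y‖ R with h | h
  · rw [min_eq_left h]
    exact max_eq_left (sub_nonneg.2 (pow_le_pow_left₀ (norm_nonneg y) h 2))
  · rw [min_eq_right h, sub_self]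
    exact ballWeight_eq_zero (by rwa [abs_of_nonneg hR])

lemma abs_ballWeight_sub_le {R : ℝ} (hR : 0 ≤ R) (u v : Euc d) :
    |ballWeight R u - ballWeight R v| ≤ 2 * R * ‖u - v‖ := by
  have hmin : |min ‖v‖ R - min ‖u‖ R| ≤ ‖u - v‖ := by
    refine (abs_min_sub_min_le_max _ _ _ _).trans ?_
    rw [sub_self, abs_zero, max_eq_left (abs_nonneg _), norm_sub_rev]
    exact abs_norm_sub_norm_le v u
  have hsum : |min ‖u‖ R + min ‖v‖ R| ≤ 2 * R := by
    rw [abs_of_nonneg (add_nonneg (le_min (norm_nonneg _) hR) (le_min (norm_nonneg _) hR))]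
    linarith [min_le_right ‖u‖ R, min_le_right ‖v‖ R]
  calc |ballWeight R u - ballWeight R v|
      = |min ‖u‖ R + min ‖v‖ R| * |min ‖v‖ R - min ‖u‖ R| := by
        rw [ballWeight_eq_sub_min_sq hR, ballWeight_eq_sub_min_sq hR, ← abs_mul]
        ring_nf
    _ ≤ 2 * R * ‖u - v‖ := mul_le_mul hsum hmin (abs_nonneg _) (by positivity)

lemma ballWeight_sub_eq_zero {r s : ℝ} {a z : Euc d} (hs : 0 ≤ s) (ha : ‖a‖ ≤ r)
    (hz : r + s ≤ ‖z‖) : ballWeight s (z - a) = 0 := by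
  refine ballWeight_eq_zero ?_
  rw [abs_of_nonneg hs]
  linarith [norm_sub_norm_le z a]

lemma abs_le_div_mul_ballWeight {ρ R B c : ℝ} {z : Euc d} (hρ : 0 ≤ ρ) (hρR : ρ < R)
    (hfar : ρ ≤ ‖z‖ → c = 0) (hc : |c| ≤ B) : |c| ≤ B / (R ^ 2 - ρ ^ 2) * ballWeight R z := by
  have hgap : 0 < R ^ 2 - ρ ^ 2 := sub_pos.2 (pow_lt_pow_left₀ hρR hρ two_ne_zero)
  have hB : 0 ≤ B := (abs_nonneg c).trans hc
  rcases le_or_gt ρ ‖z‖ with hz | hz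
  · rw [hfar hz, abs_zero]
    exact mul_nonneg (div_nonneg hB hgap.le) (ballWeight_nonneg R z)
  · have hweight : R ^ 2 - ρ ^ 2 ≤ ballWeight R z :=
      le_max_of_le_left (sub_le_sub_left (pow_le_pow_left₀ (norm_nonneg z) hz.le 2) _)
    calc |c| ≤ B / (R ^ 2 - ρ ^ 2) * (R ^ 2 - ρ ^ 2) := by rwa [div_mul_cancel₀ _ hgap.ne']
      _ ≤ B / (R ^ 2 - ρ ^ 2) * ballWeight R z :=
        mul_le_mul_of_nonneg_left hweight (div_nonneg hB hgap.le)

lemma abs_integral_mul_eval_le {R C : ℝ} {F : Euc d → ℝ} (hC : 0 ≤ C)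
    (hF : ∀ z, |F z| ≤ C * ballWeight R z) (p : MvPolynomial (Fin d) ℝ) :
    |∫ z : Euc d, F z * eval z p| ≤ C * ((∫ z : Euc d, ballWeight R z) + weightedForm R p p) := by
  have hsq : Integrable fun z : Euc d => ballWeight R z * (eval z p * eval z p) :=
    integrable_ballWeight_mul R (by fun_prop)
  rw [weightedForm_apply, ← integral_add (integrable_ballWeight R) hsq, ← integral_const_mul,
    ← Real.norm_eq_abs]
  refine norm_integral_le_of_norm_le (((integrable_ballWeight R).add hsq).const_mul C)
    (Eventually.of_forall fun z => ?_)
  have hle : |eval z p| ≤ 1 + eval z p * eval z p := by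
    rw [← abs_mul_abs_self]
    nlinarith [sq_nonneg (|eval z p| - 1), abs_nonneg (eval z p)]
  calc ‖F z * eval z p‖ = |F z| * |eval z p| := by rw [Real.norm_eq_abs, abs_mul]
    _ ≤ C * ballWeight R z * (1 + eval z p * eval z p) :=
      mul_le_mul (hF z) hle (abs_nonneg _) (mul_nonneg hC (ballWeight_nonneg R z))
    _ = C * (ballWeight R z + ballWeight R z * (eval z p * eval z p)) := by ring

lemma exists_abs_eval_le {r R : ℝ} (hr : 0 ≤ r) (hrR : r < R) (M : ℝ) :
    ∃ K, ∀ p : MvPolynomial (Fin d) ℝ, polyLaplacian p = 0 → weightedForm R p p ≤ M →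
      ∀ a : Euc d, ‖a‖ ≤ r → |eval a p| ≤ K := by
  obtain ⟨s, hs, hsR⟩ : ∃ s, 0 < s ∧ r + s < R := ⟨(R - r) / 2, by linarith, by linarith⟩
  have hI : 0 < ∫ y : Euc d, ballWeight s y := integral_ballWeight_pos hs.ne'
  have hgap : 0 < R ^ 2 - (r + s) ^ 2 :=
    sub_pos.2 (pow_lt_pow_left₀ hsR (by positivity) two_ne_zero)
  refine ⟨s ^ 2 / (R ^ 2 - (r + s) ^ 2) * ((∫ z : Euc d, ballWeight R z) + M) /
    ∫ y : Euc d, ballWeight s y, fun p hp hM a ha => ?_⟩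
  rw [le_div_iff₀ hI]
  calc |eval a p| * ∫ y : Euc d, ballWeight s y
      = |∫ z : Euc d, ballWeight s (z - a) * eval z p| := by
        rw [← eval_mul_integral_ballWeight s hp, abs_mul, abs_of_pos hI]
    _ ≤ s ^ 2 / (R ^ 2 - (r + s) ^ 2) * ((∫ z : Euc d, ballWeight R z) + weightedForm R p p) := by
        refine abs_integral_mul_eval_le (by positivity) (fun z => ?_) p
        refine abs_le_div_mul_ballWeight (by positivity) hsR (ballWeight_sub_eq_zero hs.le ha) ?_
        rw [abs_of_nonneg (ballWeight_nonneg s _)]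
        exact ballWeight_le s _
    _ ≤ s ^ 2 / (R ^ 2 - (r + s) ^ 2) * ((∫ z : Euc d, ballWeight R z) + M) := by gcongr

lemma integrable_ballWeight_sub_mul_eval (s : ℝ) (p : MvPolynomial (Fin d) ℝ) (a : Euc d) :
    Integrable fun z : Euc d => ballWeight s (z - a) * eval z p := by
  have hshift : Continuous fun z : Euc d => eval (⇑(z + a)) p :=
    (continuous_eval p).comp (continuous_add_const a)
  simpa only [sub_add_cancel] using (integrable_ballWeight_mul s hshift).comp_sub_right a

lemma exists_abs_eval_sub_le {r R : ℝ} (hr : 0 ≤ r) (hrR : r < R) (M : ℝ) :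
    ∃ K, ∀ p : MvPolynomial (Fin d) ℝ, polyLaplacian p = 0 → weightedForm R p p ≤ M →
      ∀ a b : Euc d, ‖a‖ ≤ r → ‖b‖ ≤ r → |eval a p - eval b p| ≤ K * ‖a - b‖ := by
  obtain ⟨s, hs, hsR⟩ : ∃ s, 0 < s ∧ r + s < R := ⟨(R - r) / 2, by linarith, by linarith⟩
  have hI : 0 < ∫ y : Euc d, ballWeight s y := integral_ballWeight_pos hs.ne'
  have hgap : 0 < R ^ 2 - (r + s) ^ 2 :=
    sub_pos.2 (pow_lt_pow_left₀ hsR (by positivity) two_ne_zero)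
  refine ⟨2 * s / (R ^ 2 - (r + s) ^ 2) * ((∫ z : Euc d, ballWeight R z) + M) /
    ∫ y : Euc d, ballWeight s y, fun p hp hM a b ha hb => ?_⟩
  rw [div_mul_eq_mul_div, le_div_iff₀ hI]
  calc |eval a p - eval b p| * ∫ y : Euc d, ballWeight s y
      = |∫ z : Euc d, (ballWeight s (z - a) - ballWeight s (z - b)) * eval z p| := by
        simp only [sub_mul]
        rw [integral_sub (integrable_ballWeight_sub_mul_eval s p a)
          (integrable_ballWeight_sub_mul_eval s p b), ← eval_mul_integral_ballWeight s hp,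
          ← eval_mul_integral_ballWeight s hp, ← sub_mul, abs_mul, abs_of_pos hI]
    _ ≤ 2 * s * ‖a - b‖ / (R ^ 2 - (r + s) ^ 2) *
          ((∫ z : Euc d, ballWeight R z) + weightedForm R p p) := by
        refine abs_integral_mul_eval_le (by positivity) (fun z => ?_) p
        refine abs_le_div_mul_ballWeight (by positivity) hsR (fun hz => ?_) ?_
        · rw [ballWeight_sub_eq_zero hs.le ha hz, ballWeight_sub_eq_zero hs.le hb hz, sub_zero]
        · simpa [norm_sub_rev] using abs_ballWeight_sub_le hs.le (z - a) (z - b)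
    _ ≤ 2 * s * ‖a - b‖ / (R ^ 2 - (r + s) ^ 2) * ((∫ z : Euc d, ballWeight R z) + M) := by gcongr
    _ = 2 * s / (R ^ 2 - (r + s) ^ 2) * ((∫ z : Euc d, ballWeight R z) + M) * ‖a - b‖ := by ring

lemma abs_eval_homogeneousComponent_le {r t K : ℝ} {p : MvPolynomial (Fin d) ℝ} (k : ℕ)
    (hr : 0 < r) (ht : 0 < t)
    (hK : ∀ a : Euc d, ‖a‖ ≤ r → |eval a (homogeneousComponent k p)| ≤ K) {x : Euc d}
    (hx : ‖x‖ ≤ t) : |eval x (homogeneousComponent k p)| ≤ (t / r) ^ k * K := by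
  have hscale : x = (t / r) • (r / t) • x := by
    rw [smul_smul, div_mul_div_cancel₀ hr.ne', div_self ht.ne', one_smul]
  have hnorm : ‖(r / t) • x‖ ≤ r := by
    rw [norm_smul, Real.norm_of_nonneg (by positivity), div_mul_eq_mul_div, div_le_iff₀ ht]
    exact mul_le_mul_of_nonneg_left hx hr.le
  calc |eval x (homogeneousComponent k p)|
      = (t / r) ^ k * |eval ((r / t) • x) (homogeneousComponent k p)| := by
        conv_lhs => rw [hscale]
        rw [WithLp.ofLp_smul, eval_smul_of_isHomogeneous (homogeneousComponent_isHomogeneous k p),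
          abs_mul, abs_of_nonneg (by positivity)]
    _ ≤ (t / r) ^ k * K := mul_le_mul_of_nonneg_left (hK _ hnorm) (by positivity)

lemma abs_eval_homogeneousComponent_le_of_weightedForm_le {r t R K M : ℝ}
    (hK : ∀ p : MvPolynomial (Fin d) ℝ, polyLaplacian p = 0 → weightedForm R p p ≤ M →
      ∀ a : Euc d, ‖a‖ ≤ r → |eval a p| ≤ K)
    {p : MvPolynomial (Fin d) ℝ} (hp : polyLaplacian p = 0) (hM : weightedForm R p p ≤ M)
    (hr : 0 < r) (ht : 0 < t) (k : ℕ) {x : Euc d} (hx : ‖x‖ ≤ t) :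
    |eval x (homogeneousComponent k p)| ≤ (t / r) ^ k * K :=
  abs_eval_homogeneousComponent_le k hr ht (hK _ (polyLaplacian_homogeneousComponent_eq_zero hp k)
    ((weightedForm_homogeneousComponent_self_le R hp k).trans hM)) hx

lemma hasSum_eval_homogeneousComponent {σ R : Type*} [CommSemiring R] [TopologicalSpace R]
    (p : MvPolynomial σ R) (x : σ → R) :
    HasSum (fun k => eval x (homogeneousComponent k p)) (eval x p) := by
  have hsum : ∑ k ∈ Finset.range (p.totalDegree + 1), eval x (homogeneousComponent k p) =
      eval x p := by
    rw [← map_sum, sum_homogeneousComponent]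
  rw [← hsum]
  refine hasSum_sum_of_ne_finset_zero fun k hk => ?_
  rw [homogeneousComponent_eq_zero _ _ (by simpa [Nat.lt_succ_iff] using hk), map_zero]

end InteriorEstimates

/-! ### Uniqueness for the Cauchy problem on the flat hyperplane -/

section CauchyUniqueness

variable {n : ℕ}

lemma eval_pderiv_eq_zero_of_eval_eq_zero {p : MvPolynomial (Fin (n + 1)) ℝ}
    (hp : ∀ x : Euc (n + 1), lastc x = 0 → eval x p = 0) {i : Fin (n + 1)} (hi : i ≠ Fin.last n)
    {x : Euc (n + 1)} (hx : lastc x = 0) : eval x (pderiv i p) = 0 := by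
  have hline (t : ℝ) : eval (⇑(x + t • EuclideanSpace.single i (1 : ℝ))) p = 0 :=
    hp _ (by simpa [lastc, hi.symm] using hx)
  have hderiv := hasDerivAt_eval_add_smul_single p x i 0
  simp only [hline] at hderiv
  simpa using hderiv.unique (hasDerivAt_const 0 (0 : ℝ))

lemma eval_pderiv_last_last_eq_zero {p : MvPolynomial (Fin (n + 1)) ℝ} (hlap : polyLaplacian p = 0)
    (hp : ∀ x : Euc (n + 1), lastc x = 0 → eval x p = 0) {x : Euc (n + 1)} (hx : lastc x = 0) :
    eval x (pderiv (Fin.last n) (pderiv (Fin.last n) p)) = 0 := by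
  have htangential (i : Fin n) : eval x (pderiv i.castSucc (pderiv i.castSucc p)) = 0 := by
    have hi : i.castSucc ≠ Fin.last n := (Fin.castSucc_lt_last i).ne
    exact eval_pderiv_eq_zero_of_eval_eq_zero
      (fun y hy => eval_pderiv_eq_zero_of_eval_eq_zero hp hi hy) hi hx
  have hsum := congrArg (eval x) hlap
  simpa only [polyLaplacian_apply, Fin.sum_univ_castSucc, map_add, map_sum, htangential, map_zero,
    Finset.sum_const_zero, zero_add] using hsum

lemma eq_zero_of_pderiv_last_eq_zero {p : MvPolynomial (Fin (n + 1)) ℝ}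
    (hlast : pderiv (Fin.last n) p = 0)
    (hp : ∀ x : Euc (n + 1), lastc x = 0 → eval x p = 0) : p = 0 := by
  refine eq_zero_of_eventually_eval_eq_zero (x := 0) (Eventually.of_forall fun x => ?_)
  have hconst := is_const_of_deriv_eq_zero
    (f := fun t : ℝ => eval (⇑(x + t • EuclideanSpace.single (Fin.last n) (1 : ℝ))) p)
    (fun t => (hasDerivAt_eval_add_smul_single p x _ t).differentiableAt)
    (fun t => by rw [(hasDerivAt_eval_add_smul_single p x _ t).deriv, hlast, map_zero])
    0 (-lastc x)
  rw [zero_smul, add_zero] at hconst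
  rw [hconst]
  exact hp _ (by rw [lastc_add_smul_single, add_neg_cancel])

lemma eq_zero_of_cauchy_data_eq_zero {p : MvPolynomial (Fin (n + 1)) ℝ} (hlap : polyLaplacian p = 0)
    (hp : ∀ x : Euc (n + 1), lastc x = 0 → eval x p = 0)
    (hlast : ∀ x : Euc (n + 1), lastc x = 0 → eval x (pderiv (Fin.last n) p) = 0) : p = 0 := by
  induction hk : p.totalDegree using Nat.strong_induction_on generalizing p with
  | _ k ih =>
    refine eq_zero_of_pderiv_last_eq_zero ?_ hp
    rcases Nat.eq_zero_or_pos k with rfl | hpos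
    · rw [totalDegree_eq_zero_iff_eq_C.1 hk, pderiv_C]
    · refine ih _ ?_ (by rw [polyLaplacian_pderiv, hlap, map_zero]) hlast
        (fun x hx => eval_pderiv_last_last_eq_zero hlap hp hx) rfl
      have := totalDegree_pderiv_le (Fin.last n) p
      omega

end CauchyUniqueness

/-! ### Compactness -/

section Compactness

variable {n : ℕ}

lemma exists_tendsto_ultrafilter_of_abs_le {ι : Type*} (U : Ultrafilter ι) {u : ι → ℝ} {C : ℝ}
    (hu : ∀ j, |u j| ≤ C) : ∃ l, Tendsto u U (𝓝 l) := by
  obtain ⟨l, -, hl⟩ := isCompact_Icc.ultrafilter_le_nhds' (U.map u)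
    (Ultrafilter.mem_map.2 (univ_mem' fun j => abs_le.1 (hu j)))
  exact ⟨l, hl⟩

lemma exists_mem_eval_eq_of_tendsto {ι σ : Type*} {W : Submodule ℝ (MvPolynomial σ ℝ)}
    [FiniteDimensional ℝ W] {l : Filter ι} [NeBot l] {f : ι → MvPolynomial σ ℝ}
    (hf : ∀ j, f j ∈ W) {G : (σ → ℝ) → ℝ}
    (hG : ∀ x, Tendsto (fun j => eval x (f j)) l (𝓝 (G x))) :
    ∃ q ∈ W, ∀ x, eval x q = G x := by
  let evalLinear : MvPolynomial σ ℝ →ₗ[ℝ] (σ → ℝ) → ℝ := LinearMap.pi fun x => (aeval x).toLinearMap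
  have hclosed : IsClosed (W.map evalLinear : Set ((σ → ℝ) → ℝ)) :=
    Submodule.closed_of_finiteDimensional _
  obtain ⟨q, hq, hqG⟩ := hclosed.mem_of_tendsto (f := fun j => evalLinear (f j))
    (tendsto_pi_nhds.2 hG) (Eventually.of_forall fun j => Submodule.mem_map_of_mem (hf j))
  exact ⟨q, hq, congrFun hqG⟩

lemma eq_zero_of_hasSum_pow_mul_zero {a : ℕ → ℝ}
    (h : ∀ᶠ t : ℝ in 𝓝 0, HasSum (fun k => t ^ k * a k) 0) (k : ℕ) : a k = 0 := by
  have hseries : HasFPowerSeriesAt (fun _ : ℝ => (0 : ℝ))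
      (FormalMultilinearSeries.ofScalars ℝ a) 0 := by
    rw [hasFPowerSeriesAt_iff]
    simpa using h
  calc a k = (FormalMultilinearSeries.ofScalars ℝ a).coeff k :=
        FormalMultilinearSeries.coeff_ofScalars.symm
    _ = (0 : FormalMultilinearSeries ℝ ℝ ℝ).coeff k := by rw [hseries.eq_zero]
    _ = 0 := rfl

instance (k : ℕ) : FiniteDimensional ℝ
    ↥(evenHarmonic n ⊓ homogeneousSubmodule (Fin (n + 1)) ℝ k) := by
  have : FiniteDimensional ℝ (homogeneousSubmodule (Fin (n + 1)) ℝ k) :=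
    Module.Finite.iff_fg.2 (homogeneousSubmodule_fg _ _ _)
  exact Submodule.finiteDimensional_of_le inf_le_right

lemma eq_zero_of_hasSum_eval_zero_on_flat {q : ℕ → MvPolynomial (Fin (n + 1)) ℝ}
    (hq : ∀ k, q k ∈ evenHarmonic n ⊓ homogeneousSubmodule (Fin (n + 1)) ℝ k) {ε : ℝ} (hε : 0 < ε)
    (h0 : ∀ z : Euc (n + 1), lastc z = 0 → ‖z‖ < ε → HasSum (fun k => eval z (q k)) 0) (k : ℕ) :
    q k = 0 := by
  refine eq_zero_of_cauchy_data_eq_zero (polyLaplacian_eq_zero_of_mem_evenHarmonic (hq k).1)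
    (fun z hz => ?_) fun z hz => eval_pderiv_last_eq_zero (hq k).1 hz
  refine eq_zero_of_hasSum_pow_mul_zero (a := fun k => eval z (q k)) ?_ k
  have hsmall : ∀ᶠ t : ℝ in 𝓝 0, ‖t • z‖ < ε :=
    (Continuous.tendsto' (by fun_prop) 0 0 (by simp)).eventually_lt_const hε
  filter_upwards [hsmall] with t ht
  simpa only [WithLp.ofLp_smul, eval_smul_of_isHomogeneous (hq _).2] using
    h0 (t • z) (by simpa [lastc] using Or.inr hz) ht

section UltrafilterLimit

variable {ι : Type*} (U : Ultrafilter ι) {h : ι → MvPolynomial (Fin (n + 1)) ℝ} {R M : ℝ}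

lemma exists_tendsto_eval_homogeneousComponent (hR : 0 < R) (hh : ∀ j, h j ∈ evenHarmonic n)
    (hM : ∀ j, weightedForm R (h j) (h j) ≤ M) (k : ℕ) :
    ∃ q ∈ evenHarmonic n ⊓ homogeneousSubmodule (Fin (n + 1)) ℝ k, ∀ x : Euc (n + 1),
      Tendsto (fun j => eval x (homogeneousComponent k (h j))) U (𝓝 (eval x q)) := by
  obtain ⟨K, hK⟩ := exists_abs_eval_le (d := n + 1) (half_pos hR).le (half_lt_self hR) M
  have hlim (x : Fin (n + 1) → ℝ) :
      ∃ l, Tendsto (fun j => eval x (homogeneousComponent k (h j))) U (𝓝 l) :=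
    exists_tendsto_ultrafilter_of_abs_le U fun j =>
      abs_eval_homogeneousComponent_le_of_weightedForm_le hK
        (polyLaplacian_eq_zero_of_mem_evenHarmonic (hh j)) (hM j) (half_pos hR)
        (add_pos_of_nonneg_of_pos (norm_nonneg (WithLp.toLp 2 x)) one_pos) k (lt_add_one _).le
  choose G hG using hlim
  obtain ⟨q, hq, hqG⟩ := exists_mem_eval_eq_of_tendsto
    (W := evenHarmonic n ⊓ homogeneousSubmodule (Fin (n + 1)) ℝ k)
    (fun j => ⟨homogeneousComponent_mem_evenHarmonic (hh j) k,
      homogeneousComponent_isHomogeneous k (h j)⟩) hG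
  exact ⟨q, hq, fun x => by simpa only [hqG] using hG x⟩

lemma exists_hasSum_and_tendsto_eval {q : ℕ → MvPolynomial (Fin (n + 1)) ℝ}
    (hh : ∀ j, polyLaplacian (h j) = 0) (hM : ∀ j, weightedForm R (h j) (h j) ≤ M)
    {z : Euc (n + 1)} (hz : ‖z‖ < R)
    (hq : ∀ k, Tendsto (fun j => eval z (homogeneousComponent k (h j))) U (𝓝 (eval z (q k)))) :
    ∃ L, HasSum (fun k => eval z (q k)) L ∧ Tendsto (fun j => eval z (h j)) U (𝓝 L) := by
  obtain ⟨t, hzt, htR⟩ := exists_between hz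
  obtain ⟨r, htr, hrR⟩ := exists_between htR
  have ht : 0 < t := (norm_nonneg z).trans_lt hzt
  have hr : 0 < r := ht.trans htr
  obtain ⟨K, hK⟩ := exists_abs_eval_le (d := n + 1) hr.le hrR M
  have hbound (j : ι) (k : ℕ) : ‖eval z (homogeneousComponent k (h j))‖ ≤ (t / r) ^ k * K :=
    abs_eval_homogeneousComponent_le_of_weightedForm_le hK (hh j) (hM j) hr ht k hzt.le
  have hgeom : Summable fun k : ℕ => (t / r) ^ k * K :=
    (summable_geometric_of_lt_one (by positivity) ((div_lt_one hr).2 htr)).mul_right K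
  have hsummable : Summable fun k => eval z (q k) :=
    hgeom.of_norm_bounded fun k => le_of_tendsto (hq k).norm (.of_forall fun j => hbound j k)
  refine ⟨_, hsummable.hasSum, ?_⟩
  simp only [← (hasSum_eval_homogeneousComponent (h _) z).tsum_eq]
  exact tendsto_tsum_of_dominated_convergence hgeom hq (.of_forall hbound)

lemma tendsto_eval_zero_of_tendsto_zero_on_flat {ε : ℝ} (hε : 0 < ε) (hεR : ε ≤ R)
    (hh : ∀ j, h j ∈ evenHarmonic n) (hM : ∀ j, weightedForm R (h j) (h j) ≤ M)
    (h0 : ∀ z : Euc (n + 1), lastc z = 0 → ‖z‖ < ε → Tendsto (fun j => eval z (h j)) U (𝓝 0))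
    {z : Euc (n + 1)} (hz : ‖z‖ < R) : Tendsto (fun j => eval z (h j)) U (𝓝 0) := by
  choose q hqmem hq using
    exists_tendsto_eval_homogeneousComponent U (hε.trans_le hεR) hh hM
  have hlim {y : Euc (n + 1)} (hy : ‖y‖ < R) :=
    exists_hasSum_and_tendsto_eval U
      (fun j => polyLaplacian_eq_zero_of_mem_evenHarmonic (hh j)) hM hy fun k => hq k y
  have hqzero : ∀ k, q k = 0 := by
    refine eq_zero_of_hasSum_eval_zero_on_flat hqmem hε fun y hy0 hy => ?_
    obtain ⟨L, hsum, hL⟩ := hlim (hy.trans_le hεR)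
    rwa [tendsto_nhds_unique hL (h0 y hy0 hy)] at hsum
  obtain ⟨L, hsum, hL⟩ := hlim hz
  simp only [hqzero, map_zero] at hsum
  rwa [hsum.unique hasSum_zero] at hL

end UltrafilterLimit

lemma exists_pos_le_abs_eval_on_flat {ε r R c : ℝ} (hε : 0 < ε) (hεR : ε ≤ R) (hr : 0 ≤ r)
    (hrR : r < R) (hc : 0 < c) (M : ℝ) :
    ∃ η > 0, ∀ h ∈ evenHarmonic n, weightedForm R h h ≤ M →
      (∃ x : Euc (n + 1), ‖x‖ ≤ r ∧ c ≤ |eval x h|) →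
      ∃ x : Euc (n + 1), lastc x = 0 ∧ ‖x‖ < ε ∧ η ≤ |eval x h| := by
  by_contra! hcon
  choose h hh hM hlarge hsmall using fun j : ℕ => hcon _ (Nat.one_div_pos_of_nat (α := ℝ) (n := j))
  choose x hxr hxc using hlarge
  let U : Ultrafilter ℕ := hyperfilter ℕ
  have hflat (z : Euc (n + 1)) (hz : lastc z = 0) (hzε : ‖z‖ < ε) :
      Tendsto (fun j => eval z (h j)) U (𝓝 0) :=
    squeeze_zero_norm (fun j => (hsmall j z hz hzε).le)
      (tendsto_one_div_add_atTop_nhds_zero_nat.mono_left Nat.hyperfilter_le_atTop)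
  obtain ⟨z, hz, hxz⟩ := (isCompact_closedBall (0 : Euc (n + 1)) r).ultrafilter_le_nhds' (U.map x)
    (Ultrafilter.mem_map.2 (univ_mem' fun j => mem_closedBall_zero_iff.2 (hxr j)))
  rw [mem_closedBall_zero_iff] at hz
  obtain ⟨K, hK⟩ := exists_abs_eval_sub_le (d := n + 1) hr hrR M
  have hdist : Tendsto (fun j => K * ‖x j - z‖ + |eval z (h j)|) U (𝓝 0) := by
    have hz0 := tendsto_eval_zero_of_tendsto_zero_on_flat U hε hεR hh hM hflat (hz.trans_lt hrR)
    simpa using ((tendsto_iff_norm_sub_tendsto_zero.1 hxz).const_mul K).add hz0.abs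
  refine hc.not_ge (ge_of_tendsto hdist (.of_forall fun j => (hxc j).trans ?_))
  have hlip := hK (h j) (polyLaplacian_eq_zero_of_mem_evenHarmonic (hh j)) (hM j) _ _ (hxr j) hz
  linarith [abs_sub_abs_le_abs_sub (eval (x j) (h j)) (eval z (h j))]

lemma exists_pos_le_abs_eval_on_ball {ε r R c : ℝ} (hε : 0 < ε) (hεR : ε < R) (hr : 0 ≤ r)
    (hrR : r < R) (hc : 0 < c) (M : ℝ) :
    ∃ δ > 0, ∀ h ∈ evenHarmonic n, weightedForm R h h ≤ M →
      (∃ x : Euc (n + 1), ‖x‖ ≤ r ∧ c ≤ |eval x h|) →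
      ∃ x : Euc (n + 1), lastc x = 0 ∧ ‖x‖ < ε ∧ ∀ y ∈ ball x δ, δ ≤ |eval y h| := by
  obtain ⟨η, hη, hflat⟩ := exists_pos_le_abs_eval_on_flat (n := n) hε hεR.le hr hrR hc M
  obtain ⟨r', hεr', hr'R⟩ := exists_between hεR
  obtain ⟨K, hK⟩ := exists_abs_eval_sub_le (d := n + 1) (hε.trans hεr').le hr'R M
  have hδη : min (r' - ε) (η / (|K| + 1)) * (|K| + 1) ≤ η :=
    (le_div_iff₀ (by positivity)).1 (min_le_right _ _)
  have hδr := min_le_left (r' - ε) (η / (|K| + 1))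
  have hδ : 0 < min (r' - ε) (η / (|K| + 1)) := lt_min (sub_pos.2 hεr') (by positivity)
  set δ := min (r' - ε) (η / (|K| + 1))
  refine ⟨δ, hδ, fun h hh hM hlarge => ?_⟩
  obtain ⟨x, hx, hxε, hxη⟩ := hflat h hh hM hlarge
  refine ⟨x, hx, hxε, fun y hy => ?_⟩
  rw [mem_ball_iff_norm'] at hy
  have hyr : ‖y‖ ≤ r' := by linarith [norm_sub_norm_le y x, norm_sub_rev x y]
  have hlip := hK h (polyLaplacian_eq_zero_of_mem_evenHarmonic hh) hM x y (hxε.trans hεr').le hyr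
  have hKδ : K * ‖x - y‖ ≤ |K| * δ :=
    mul_le_mul (le_abs_self K) hy.le (norm_nonneg _) (abs_nonneg K)
  linarith [abs_sub_abs_le_abs_sub (eval x h) (eval y h)]

end Compactness

/-! ### The doubling condition -/

section Doubling

lemma Hfun_nonneg {d : ℕ} (Ω : Set (Euc d)) (u : Euc d → ℝ) (x : Euc d) (r : ℝ) :
    0 ≤ Hfun Ω u x r :=
  integral_nonneg fun _ => sq_nonneg _

lemma Hfun_pos {d : ℕ} {Ω : Set (Euc d)} {u : Euc d → ℝ} {x y : Euc d} {r : ℝ} (hΩ : IsOpen Ω)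
    (hu : ContinuousOn u Ω) (hint : IntegrableOn (fun z => u z ^ 2) Ω) (hy : y ∈ ball x r ∩ Ω)
    (huy : u y ≠ 0) : 0 < Hfun Ω u x r := by
  rw [Hfun, setIntegral_pos_iff_support_of_nonneg_ae (Eventually.of_forall fun _ => sq_nonneg _)
    (hint.mono_set inter_subset_right)]
  have hopen : IsOpen ((ball x r ∩ Ω) ∩ u ⁻¹' {0}ᶜ) :=
    (hu.mono inter_subset_right).isOpen_inter_preimage (isOpen_ball.inter hΩ)
      isOpen_compl_singleton
  exact (hopen.measure_pos volume ⟨y, hy, huy⟩).trans_le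
    (measure_mono fun z hz => ⟨pow_ne_zero 2 hz.2, hz.1⟩)

lemma Hfun_le_of_abs_le_one {d : ℕ} {Ω : Set (Euc d)} {u : Euc d → ℝ} {x : Euc d} {r : ℝ}
    (hΩ : volume Ω ≠ ⊤) (hu : ∀ y ∈ ball x r ∩ Ω, |u y| ≤ 1) : Hfun Ω u x r ≤ volume.real Ω := by
  have hfinite : volume (ball x r ∩ Ω) < ⊤ :=
    (measure_mono inter_subset_right).trans_lt hΩ.lt_top
  have hbound : ∀ y ∈ ball x r ∩ Ω, ‖u y ^ 2‖ ≤ 1 := fun y hy => by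
    rw [norm_pow, Real.norm_eq_abs]
    exact pow_le_one₀ (abs_nonneg _) (hu y hy)
  calc Hfun Ω u x r ≤ 1 * volume.real (ball x r ∩ Ω) :=
        (le_abs_self _).trans (norm_setIntegral_le_of_norm_le_const hfinite hbound)
    _ ≤ volume.real Ω := by
        rw [one_mul]
        exact measureReal_mono inter_subset_right hΩ

lemma Hfun_two_mul_le {d : ℕ} {Ω : Set (Euc d)} {u : Euc d → ℝ} {x : Euc d} {r N : ℝ}
    (hpos : 0 < Hfun Ω u x r) (hN : Nfun Ω u x r ≤ N) :
    Hfun Ω u x (2 * r) ≤ Real.exp N * Hfun Ω u x r := by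
  rcases (Hfun_nonneg Ω u x (2 * r)).eq_or_lt with h0 | h0
  · rw [← h0]
    positivity
  · exact (div_le_iff₀ hpos).1 ((Real.log_le_iff_le_exp (div_pos h0 hpos)).1 hN)

lemma le_of_supOn_eq {α : Type*} {u : α → ℝ} {s : Set α} {m : ℝ} (hm : m ≠ 0)
    (hsup : supOn u s = m) {y : α} (hy : y ∈ s) : u y ≤ m := by
  have hbdd : BddAbove (u '' s) := by
    by_contra h
    exact hm (hsup.symm.trans (Real.sSup_of_not_bddAbove h))
  exact hsup ▸ le_csSup hbdd (mem_image_of_mem u hy)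

lemma exists_lt_of_supOn_eq {α : Type*} {u : α → ℝ} {s : Set α} {m c : ℝ} (hm : m ≠ 0)
    (hsup : supOn u s = m) (hc : c < m) : ∃ y ∈ s, c < u y := by
  have hne : (u '' s).Nonempty := by
    by_contra! h
    exact hm (hsup.symm.trans (by rw [supOn, h, Real.sSup_empty]))
  simpa using exists_lt_of_lt_csSup hne (hc.trans_eq hsup.symm)

end Doubling

section EvenIntegral

variable {n : ℕ}

lemma volume_lastc_eq_zero : volume {y : Euc (n + 1) | lastc y = 0} = 0 := by
  set L : Submodule ℝ (Euc (n + 1)) :=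
    LinearMap.ker (EuclideanSpace.proj (𝕜 := ℝ) (Fin.last n) : Euc (n + 1) →L[ℝ] ℝ).toLinearMap
  refine Measure.addHaar_submodule volume L fun htop => ?_
  have hmem : (EuclideanSpace.single (Fin.last n) 1 : Euc (n + 1)) ∈ L := htop ▸ Submodule.mem_top
  simp [L] at hmem

lemma measurableSet_lastc_pos : MeasurableSet {y : Euc (n + 1) | 0 < lastc y} :=
  (isOpen_lt continuous_const continuous_lastc).measurableSet

lemma integral_eq_two_mul_setIntegral_of_even {F : Euc (n + 1) → ℝ} (hF : Integrable F)
    (heven : ∀ y, F (reflectLast n y) = F y) :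
    ∫ y, F y = 2 * ∫ y in {y : Euc (n + 1) | 0 < lastc y}, F y := by
  have hreflect := (reflectLast n).measurePreserving.setIntegral_preimage_emb
    (reflectLast n).toHomeomorph.measurableEmbedding F {y : Euc (n + 1) | 0 < lastc y}ᶜ
  simp only [heven] at hreflect
  rw [← integral_add_compl measurableSet_lastc_pos hF, two_mul, ← hreflect]
  congr 1
  refine setIntegral_congr_set ?_
  have hne : ∀ᵐ y : Euc (n + 1), lastc y ≠ 0 := by
    simpa [ae_iff] using volume_lastc_eq_zero
  filter_upwards [hne] with y hy
  refine propext (?_ : ¬ 0 < lastc (reflectLast n y) ↔ 0 < lastc y)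
  rw [lastc_reflectLast, neg_pos, not_lt]
  exact hy.symm.le_iff_lt

lemma ballWeight_reflectLast (R : ℝ) (y : Euc (n + 1)) :
    ballWeight R (reflectLast n y) = ballWeight R y := by
  rw [ballWeight, LinearIsometryEquiv.norm_map, ballWeight]

lemma weightedForm_self_eq_two_mul {R : ℝ} (hR : 0 ≤ R) (hR1 : R ≤ 1)
    {h : MvPolynomial (Fin (n + 1)) ℝ} (hh : h ∈ evenHarmonic n) :
    weightedForm R h h = 2 * ∫ y in ball 0 R ∩ unitHalfBall n,
      ballWeight R y * (eval y h * eval y h) := by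
  rw [weightedForm_apply, integral_eq_two_mul_setIntegral_of_even
    (integrable_ballWeight_mul R (by fun_prop)) fun y => by
      rw [ballWeight_reflectLast, eval_reflectLast_of_mem_evenHarmonic hh]]
  congr 1
  refine setIntegral_eq_of_subset_of_forall_sdiff_eq_zero measurableSet_lastc_pos
    (fun y hy => hy.2.2) fun y hy => ?_
  have hfar : R ≤ ‖y‖ := by
    by_contra! hlt
    exact hy.2 ⟨mem_ball_zero_iff.2 hlt, hlt.trans_le hR1, hy.1⟩
  rw [ballWeight_eq_zero (by rwa [abs_of_nonneg hR]), zero_mul]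

lemma volume_unitHalfBall_ne_top : volume (unitHalfBall n) ≠ ⊤ :=
  ((measure_mono subset_closure).trans_lt isCompact_closure_unitHalfBall.measure_lt_top).ne

lemma integrableOn_sq_unitHalfBall {g : Euc (n + 1) → ℝ}
    (hg : ContinuousOn g (closure (unitHalfBall n))) :
    IntegrableOn (fun y => g y ^ 2) (unitHalfBall n) :=
  ((hg.pow 2).integrableOn_compact isCompact_closure_unitHalfBall).mono_set subset_closure

lemma weightedForm_self_le {R : ℝ} (hR : 0 ≤ R) (hR1 : R ≤ 1) {g : Euc (n + 1) → ℝ}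
    (hg : ContinuousOn g (closure (unitHalfBall n))) {h : MvPolynomial (Fin (n + 1)) ℝ}
    (hh : h ∈ evenHarmonic n)
    (hgh : ∀ y ∈ closure (unitHalfBall n), |g y - eval y h| ≤ 1) :
    weightedForm R h h ≤
      4 * R ^ 2 * (Hfun (unitHalfBall n) g 0 R + volume.real (unitHalfBall n)) := by
  set S := ball 0 R ∩ unitHalfBall n
  have hS : S ⊆ unitHalfBall n := inter_subset_right
  have hint : IntegrableOn (fun y => g y ^ 2) S := (integrableOn_sq_unitHalfBall hg).mono_set hS
  have hone : IntegrableOn (fun _ => (1 : ℝ)) S :=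
    integrableOn_const (measure_ne_top_of_subset hS volume_unitHalfBall_ne_top)
  have hpoint (y : Euc (n + 1)) (hy : y ∈ S) :
      ballWeight R y * (eval y h * eval y h) ≤ 2 * R ^ 2 * (g y ^ 2 + 1) := by
    have hdiff : (g y - eval y h) ^ 2 ≤ 1 :=
      (sq_le_one_iff_abs_le_one _).2 (hgh y (subset_closure (hS hy)))
    have hsq : eval y h * eval y h ≤ 2 * (g y ^ 2 + 1) := by
      nlinarith [sq_nonneg (2 * g y - eval y h)]
    linarith [mul_le_mul (ballWeight_le R y) hsq (mul_self_nonneg _) (sq_nonneg R)]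
  calc weightedForm R h h
      = 2 * ∫ y in S, ballWeight R y * (eval y h * eval y h) :=
        weightedForm_self_eq_two_mul hR hR1 hh
    _ ≤ 2 * ∫ y in S, 2 * R ^ 2 * (g y ^ 2 + 1) := by
        refine mul_le_mul_of_nonneg_left ?_ zero_le_two
        exact setIntegral_mono_on (integrable_ballWeight_mul R (by fun_prop)).integrableOn
          ((hint.add hone).const_mul _) (isOpen_ball.inter isOpen_unitHalfBall).measurableSet hpoint
    _ = 4 * R ^ 2 * (Hfun (unitHalfBall n) g 0 R + volume.real S) := by
        rw [integral_const_mul, integral_add hint hone, setIntegral_const, smul_eq_mul, mul_one,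
          Hfun]
        ring
    _ ≤ 4 * R ^ 2 * (Hfun (unitHalfBall n) g 0 R + volume.real (unitHalfBall n)) := by
        gcongr
        exact volume_unitHalfBall_ne_top

lemma weightedForm_self_le_of_doubling {r N : ℝ} (hr : 0 ≤ r) (hr1 : 2 * r ≤ 1)
    {g : Euc (n + 1) → ℝ} (hg : ContinuousOn g (closure (unitHalfBall n)))
    (hbound : ∀ y ∈ ball 0 r ∩ unitHalfBall n, |g y| ≤ 1)
    (hne : ∃ y ∈ ball 0 r ∩ unitHalfBall n, g y ≠ 0) (hN : Nfun (unitHalfBall n) g 0 r ≤ N)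
    {h : MvPolynomial (Fin (n + 1)) ℝ} (hh : h ∈ evenHarmonic n)
    (hgh : ∀ y ∈ closure (unitHalfBall n), |g y - eval y h| ≤ 1) :
    weightedForm (2 * r) h h ≤
      4 * (2 * r) ^ 2 * ((Real.exp N + 1) * volume.real (unitHalfBall n)) := by
  obtain ⟨y, hy, hgy⟩ := hne
  have hpos : 0 < Hfun (unitHalfBall n) g 0 r :=
    Hfun_pos isOpen_unitHalfBall (hg.mono subset_closure) (integrableOn_sq_unitHalfBall hg) hy hgy
  have hdouble : Hfun (unitHalfBall n) g 0 (2 * r) ≤ Real.exp N * volume.real (unitHalfBall n) :=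
    (Hfun_two_mul_le hpos hN).trans (mul_le_mul_of_nonneg_left
      (Hfun_le_of_abs_le_one volume_unitHalfBall_ne_top hbound) (Real.exp_pos N).le)
  refine (weightedForm_self_le (by positivity) hr1 hg hh hgh).trans ?_
  rw [add_one_mul]
  gcongr

end EvenIntegral

end HalfBall

/-- Half-ball lemma: for every `N > 0` there are `ρ(N) > 0`
and `c₀(N) > 0` such that any function `g`, harmonic in the upper half-ball `B₊`
with vanishing normal derivative on the flat face, normalized by
`sup_{(1/4)B₊} |g| = 1` and with doubling index `N_g(0,1/4) ≤ N`, satisfies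
`|g| ≥ c₀` on `B(x,ρ) ∩ B₊` for some `x ∈ Γ₀ ∩ (1/8)B`. -/
theorem half_ball_lower_bound {n : ℕ} :
    ∀ N : ℝ, 0 < N → ∃ ρ₀ : ℝ, 0 < ρ₀ ∧ ∃ c₀ : ℝ, 0 < c₀ ∧
    ∀ g : Euc (n + 1) → ℝ,
      ContinuousOn g (closure (unitHalfBall n)) →
      HarmonicOn g (unitHalfBall n) →
      (∀ y ∈ flatFace n,
        DifferentiableWithinAt ℝ g (closure (unitHalfBall n)) y ∧
        fderivWithin ℝ g (closure (unitHalfBall n)) y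
          (EuclideanSpace.single (Fin.last n) 1) = 0) →
      supOn (fun y => |g y|)
        {y : Euc (n + 1) | ‖y‖ < 1 / 4 ∧ 0 < lastc y} = 1 →
      Nfun (unitHalfBall n) g 0 (1 / 4) ≤ N →
      ∃ x ∈ flatFace n ∩ ball (0 : Euc (n + 1)) (1 / 8),
        ∀ y ∈ ball x ρ₀ ∩ unitHalfBall n, c₀ ≤ |g y| := by
  intro N _
  obtain ⟨δ, hδ, hlower⟩ := exists_pos_le_abs_eval_on_ball (n := n) (ε := 1 / 8) (r := 1 / 4)
    (R := 2 * (1 / 4)) (c := 1 / 2) (by norm_num) (by norm_num) (by norm_num) (by norm_num)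
    (by norm_num) (4 * (2 * (1 / 4)) ^ 2 * ((Real.exp N + 1) * volume.real (unitHalfBall n)))
  refine ⟨δ, hδ, δ / 2, half_pos hδ, fun g hcont hharm hflat hsup hN => ?_⟩
  have hquarter : ball 0 (1 / 4) ∩ unitHalfBall n ⊆ {y | ‖y‖ < 1 / 4 ∧ 0 < lastc y} :=
    fun y hy => ⟨mem_ball_zero_iff.1 hy.1, hy.2.2⟩
  obtain ⟨z, ⟨hz, hz0⟩, hgz⟩ :=
    exists_lt_of_supOn_eq one_ne_zero hsup (by norm_num : (3 / 4 : ℝ) < 1)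
  have hzmem : z ∈ unitHalfBall n := ⟨by linarith, hz0⟩
  have hg := isNeumannSolution_of_harmonicOn hcont hharm hflat
  obtain ⟨h, hh, hgh⟩ :=
    hg.exists_evenHarmonic_near (lt_min (half_pos hδ) (by norm_num : (0 : ℝ) < 1 / 4))
  have hM := weightedForm_self_le_of_doubling (by norm_num) (by norm_num) hcont
    (fun y hy => le_of_supOn_eq one_ne_zero hsup (hquarter hy))
    ⟨z, ⟨mem_ball_zero_iff.2 hz, hzmem⟩, abs_pos.1 (by linarith)⟩ hN hh
    fun y hy => (hgh y hy).trans ((min_le_right _ _).trans (by norm_num))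
  obtain ⟨x, hx0, hx, hxδ⟩ := hlower h hh hM ⟨z, hz.le, by
    linarith [(hgh z (subset_closure hzmem)).trans (min_le_right _ _),
      abs_sub_abs_le_abs_sub (g z) (MvPolynomial.eval z h)]⟩
  refine ⟨x, ⟨⟨by linarith, hx0⟩, mem_ball_zero_iff.2 hx⟩, fun y hy => ?_⟩
  linarith [hxδ y hy.1, (hgh y (subset_closure hy.2)).trans (min_le_left _ _),
    abs_sub_abs_le_abs_sub (MvPolynomial.eval y h) (g y),
    abs_sub_comm (g y) (MvPolynomial.eval y h)]

end NodalNeumann
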